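/- There exists a constant C > 0 such that for every real x ≥ 1 and every nonzero ideal K of ℤ[i] with N(K) ≤ x, the ratio (number of pairs (I, J) ∈ P(x) with I ⊔ J = K) / (number of pairs in P(x)) differs from 1/(ζ_{ℚ(i)}(2)·N(K)²) by at most C/(x^(2/3)·N(K)^(4/3)). -/

import Mathlib

open Real

/-- The absolute norm of an ideal of `ℤ[i]`: the cardinality of the quotient ring. -/
noncomputable def normI (I : Ideal GaussianInt) : ℕ := Nat.card (GaussianInt ⧸ I)

/-- `P x` : pairs of nonzero ideals of `ℤ[i]` with both norms at most `x`. -/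
noncomputable def P (x : ℝ) : Set (Ideal GaussianInt × Ideal GaussianInt) :=
  {p | p.1 ≠ ⊥ ∧ p.2 ≠ ⊥ ∧ (normI p.1 : ℝ) ≤ x ∧ (normI p.2 : ℝ) ≤ x}

/-- `ζ_{ℚ(i)}(2)`, the sum of `1/N(I)²` over nonzero ideals of `ℤ[i]`. -/
noncomputable def zetaQi2 : ℝ := ∑' I : {I : Ideal GaussianInt // I ≠ ⊥}, 1 / (normI I.1 : ℝ) ^ 2

/-!
As `ℤ[i]` is principal with unit group `{±1, ±i}`, its nonzero ideals of norm at most `x` correspond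
to the lattice points of a quarter disc of radius `√x`. By Dirichlet's hyperbola method and the
trapezoidal rule, their number is `π x / 4` up to a bounded error and a sum of values of the
sawtooth `{t} - 1/2` at `t = √(x - n²)`. Expanding the sawtooth in a Fourier series and applying van
der Corput's second derivative estimate, which follows from the Kusmin–Landau inequality, bounds
this sum by `O(x^(1/3))`.

Dividing by `K` turns the pairs of norm at most `x` with greatest common divisor `K` into the
coprime pairs of norm at most `x / N(K)`, and Möbius inversion over their common divisors `D` gives
the squared count at `x / (N(K) N(D))`. Its error term `O((x / (N(K) N(D)))^(4/3))` can be summed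
over `D` because `∑ N(D)^(-4/3)` converges.
-/

open Filter Topology
open scoped FourierTransform

section ExponentialSums

lemma fourierChar_intCast (k : ℤ) : 𝐞 (k : ℝ) = 1 := by
  ext
  rw [fourierChar_apply, Circle.coe_one, Complex.exp_eq_one_iff]
  exact ⟨k, by push_cast; ring⟩

lemma one_sub_fourierChar (t : ℝ) :
    1 - (𝐞 t : ℂ) = 2 * sin (π * t) * (sin (π * t) - cos (π * t) * Complex.I) := by
  rw [fourierChar_apply, Complex.exp_mul_I, ← Complex.ofReal_cos, ← Complex.ofReal_sin, mul_assoc,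
    cos_two_mul, sin_two_mul]
  have h : (sin (π * t) : ℂ) ^ 2 + (cos (π * t) : ℂ) ^ 2 = 1 := mod_cast sin_sq_add_cos_sq (π * t)
  push_cast at h ⊢
  linear_combination -2 * h

lemma norm_one_sub_fourierChar (t : ℝ) : ‖1 - (𝐞 t : ℂ)‖ = 2 * |sin (π * t)| := by
  rw [fourierChar_apply, norm_sub_rev, mul_comm, Complex.norm_exp_I_mul_ofReal_sub_one, norm_mul,
    Real.norm_eq_abs, Real.norm_eq_abs, abs_two, mul_assoc, mul_div_cancel_left₀ _ two_ne_zero]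

lemma norm_one_sub_fourierChar_le (t : ℝ) : ‖1 - (𝐞 t : ℂ)‖ ≤ 2 * π * |t| := by
  rw [norm_one_sub_fourierChar, mul_assoc, ← abs_of_pos pi_pos, ← abs_mul, abs_of_pos pi_pos]
  exact mul_le_mul_of_nonneg_left abs_sin_le_abs zero_le_two

lemma inv_one_sub_fourierChar {t : ℝ} (ht : sin (π * t) ≠ 0) :
    (1 - (𝐞 t : ℂ))⁻¹ = 1 / 2 + (cot (π * t) / 2 : ℝ) * Complex.I := by
  refine inv_eq_of_mul_eq_one_right ?_
  rw [one_sub_fourierChar, cot_eq_cos_div_sin]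
  have hs : (sin (π * t) : ℂ) ≠ 0 := mod_cast ht
  have h : (sin (π * t) : ℂ) ^ 2 + (cos (π * t) : ℂ) ^ 2 = 1 := mod_cast sin_sq_add_cos_sq (π * t)
  push_cast at h hs ⊢
  field_simp
  linear_combination h - Complex.cos (π * t) ^ 2 * Complex.I_sq

lemma two_mul_le_sin_pi_mul {θ t : ℝ} (hθ : 0 ≤ θ) (h₁ : θ ≤ t) (h₂ : t ≤ 1 - θ) :
    2 * θ ≤ sin (π * t) := by
  have jordan {s : ℝ} (hs₀ : 0 ≤ s) (hs : s ≤ 1 / 2) : 2 * s ≤ sin (π * s) := by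
    have := mul_le_sin (x := π * s) (by positivity) (by nlinarith [pi_pos])
    rwa [← mul_assoc, div_mul_cancel₀ _ pi_ne_zero] at this
  rcases le_total t (1 / 2) with ht | ht
  · linarith [jordan (hθ.trans h₁) ht]
  · have := jordan (s := 1 - t) (by linarith) (by linarith)
    rw [mul_one_sub π, sin_pi_sub] at this
    linarith

lemma antitoneOn_cot_pi_mul : AntitoneOn (fun t ↦ cot (π * t)) (Set.Ioo 0 1) := by
  have sin_pos {t : ℝ} (ht : t ∈ Set.Ioo (0 : ℝ) 1) : 0 < sin (π * t) :=
    sin_pos_of_pos_of_lt_pi (mul_pos pi_pos ht.1) (by nlinarith [ht.2, pi_pos])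
  intro s hs t ht hst
  have h : 0 ≤ sin (π * t - π * s) :=
    sin_nonneg_of_nonneg_of_le_pi (by nlinarith [pi_pos]) (by nlinarith [pi_pos, hs.1, ht.2])
  simp only [cot_eq_cos_div_sin]
  rw [div_le_div_iff₀ (sin_pos ht) (sin_pos hs)]
  rw [sin_sub] at h
  linarith

lemma abs_cot_pi_mul_le {θ t : ℝ} (hθ : 0 < θ) (h₁ : θ ≤ t) (h₂ : t ≤ 1 - θ) :
    |cot (π * t)| ≤ 1 / (2 * θ) := by
  have hsin := two_mul_le_sin_pi_mul hθ.le h₁ h₂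
  rw [cot_eq_cos_div_sin, abs_div, abs_of_pos (by linarith : 0 < sin (π * t))]
  exact div_le_div₀ zero_le_one (abs_cos_le_one _) (by positivity) hsin

lemma norm_inv_one_sub_fourierChar_le {θ t : ℝ} (hθ : 0 < θ) (h₁ : θ ≤ t) (h₂ : t ≤ 1 - θ) :
    ‖(1 - (𝐞 t : ℂ))⁻¹‖ ≤ 1 / (4 * θ) := by
  have hsin := two_mul_le_sin_pi_mul hθ.le h₁ h₂
  rw [norm_inv, norm_one_sub_fourierChar, ← one_div]
  refine one_div_le_one_div_of_le (by positivity) ?_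
  linarith [le_abs_self (sin (π * t))]

lemma norm_inv_one_sub_fourierChar_sub {s t : ℝ} (hs : 0 < s) (hst : s ≤ t) (ht : t < 1) :
    ‖(1 - (𝐞 t : ℂ))⁻¹ - (1 - (𝐞 s : ℂ))⁻¹‖ = cot (π * s) / 2 - cot (π * t) / 2 := by
  have sin_ne {u : ℝ} (hu₀ : 0 < u) (hu : u < 1) : sin (π * u) ≠ 0 :=
    (sin_pos_of_pos_of_lt_pi (mul_pos pi_pos hu₀) (by nlinarith [pi_pos])).ne'
  have hcot := antitoneOn_cot_pi_mul ⟨hs, hst.trans_lt ht⟩ ⟨hs.trans_le hst, ht⟩ hst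
  simp only at hcot
  rw [inv_one_sub_fourierChar (sin_ne hs (hst.trans_lt ht)),
    inv_one_sub_fourierChar (sin_ne (hs.trans_le hst) ht), add_sub_add_left_eq_sub, ← sub_mul,
    norm_mul, Complex.norm_I, mul_one, ← Complex.ofReal_sub, Complex.norm_real,
    Real.norm_eq_abs, abs_of_nonpos (by linarith), neg_sub]

lemma sum_range_succ_eq_of_mul_sub {R : Type*} [CommRing R] {z c : ℕ → R} {N : ℕ}
    (h : ∀ n ≤ N, c n * (z n - z (n + 1)) = z n) :
    ∑ n ∈ Finset.range (N + 1), z n =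
      c 0 * z 0 - c N * z (N + 1) + ∑ n ∈ Finset.range N, (c (n + 1) - c n) * z (n + 1) := by
  induction N with
  | zero =>
    have := h 0 le_rfl
    simp only [zero_add, Finset.sum_range_one, Finset.sum_range_zero, add_zero] at this ⊢
    linear_combination -this
  | succ N ih =>
    rw [Finset.sum_range_succ, ih fun n hn ↦ h n (by lia), Finset.sum_range_succ]
    linear_combination -h (N + 1) le_rfl

-- With `c n = (1 - 𝐞 (d n))⁻¹ = 1/2 + (i/2) cot (π d n)` the sum is summed by parts, and the
-- total variation of `c` telescopes because `cot (π d n)` is monotone in `n`.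
lemma kusmin_landau_range {f : ℕ → ℝ} {N : ℕ} {θ : ℝ} (hθ : 0 < θ)
    (hd : ∀ n < N, f (n + 1) - f n ∈ Set.Icc θ (1 - θ))
    (hmono : ∀ n, n + 1 < N → f (n + 1) - f n ≤ f (n + 2) - f (n + 1)) :
    ‖∑ n ∈ Finset.range N, (𝐞 (f n) : ℂ)‖ ≤ 1 / θ := by
  obtain _ | N := N
  · simpa using hθ.le
  set d : ℕ → ℝ := fun n ↦ f (n + 1) - f n with hd_def
  set c : ℕ → ℂ := fun n ↦ (1 - (𝐞 (d n) : ℂ))⁻¹ with hc_def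
  have hc (n : ℕ) (hn : n < N + 1) : ‖c n‖ ≤ 1 / (4 * θ) :=
    norm_inv_one_sub_fourierChar_le hθ (hd n hn).1 (hd n hn).2
  have habel : ∀ n ≤ N, c n * ((𝐞 (f n) : ℂ) - 𝐞 (f (n + 1))) = 𝐞 (f n) := by
    intro n hn
    have hstep : (𝐞 (f (n + 1)) : ℂ) = 𝐞 (f n) * 𝐞 (d n) := by
      rw [← Circle.coe_mul, ← AddChar.map_add_eq_mul, hd_def, add_sub_cancel]
    have hsin := two_mul_le_sin_pi_mul hθ.le (hd n (by lia)).1 (hd n (by lia)).2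
    have hne : 1 - (𝐞 (d n) : ℂ) ≠ 0 := by
      rw [← norm_ne_zero_iff, norm_one_sub_fourierChar]
      exact mul_ne_zero two_ne_zero (abs_ne_zero.2 (by linarith))
    rw [hstep, hc_def]
    field_simp
  have hvar : ∀ n ∈ Finset.range N, ‖(c (n + 1) - c n) * 𝐞 (f (n + 1))‖ =
      cot (π * d n) / 2 - cot (π * d (n + 1)) / 2 := by
    intro n hn
    have hn := Finset.mem_range.1 hn
    rw [norm_mul, Circle.norm_coe, mul_one]
    exact norm_inv_one_sub_fourierChar_sub (hθ.trans_le (hd n (by lia)).1) (hmono n (by lia))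
      (by linarith [(hd (n + 1) (by lia)).2])
  have hcot₀ := (abs_le.1 (abs_cot_pi_mul_le hθ (hd 0 (by lia)).1 (hd 0 (by lia)).2)).2
  have hcotN := (abs_le.1 (abs_cot_pi_mul_le hθ (hd N (by lia)).1 (hd N (by lia)).2)).1
  rw [sum_range_succ_eq_of_mul_sub habel]
  calc _ ≤ ‖c 0‖ + ‖c N‖ + ∑ n ∈ Finset.range N, ‖(c (n + 1) - c n) * 𝐞 (f (n + 1))‖ := by
        refine (norm_add_le _ _).trans (add_le_add ((norm_sub_le _ _).trans_eq ?_)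
          (norm_sum_le _ _))
        simp only [norm_mul, Circle.norm_coe, mul_one]
    _ ≤ 1 / (4 * θ) + 1 / (4 * θ) + (cot (π * d 0) / 2 - cot (π * d N) / 2) := by
        refine add_le_add (add_le_add (hc 0 (by lia)) (hc N (by lia))) ?_
        exact ((Finset.sum_congr rfl hvar).trans
          (Finset.sum_range_sub' (fun n ↦ cot (π * d n) / 2) N)).le
    _ ≤ 1 / (4 * θ) + 1 / (4 * θ) + (1 / (2 * θ) / 2 + 1 / (2 * θ) / 2) := by linarith
    _ = 1 / θ := by field_simp; norm_num

theorem kusmin_landau {f : ℕ → ℝ} {a b : ℕ} {θ : ℝ} (hθ : 0 < θ) (k : ℤ)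
    (hd : ∀ n ∈ Finset.Ico a b, f (n + 1) - f n ∈ Set.Icc (k + θ) (k + 1 - θ))
    (hmono : ∀ n, a ≤ n → n + 1 < b → f (n + 1) - f n ≤ f (n + 2) - f (n + 1)) :
    ‖∑ n ∈ Finset.Ico a b, (𝐞 (f n) : ℂ)‖ ≤ 1 / θ := by
  set g : ℕ → ℝ := fun n ↦ f (a + n) + ((-k * n : ℤ) : ℝ) with hg
  have hfg (n : ℕ) : 𝐞 (f (a + n)) = 𝐞 (g n) := by
    rw [hg, AddChar.map_add_eq_mul, fourierChar_intCast, mul_one]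
  have hdiff (n : ℕ) : g (n + 1) - g n = f (a + n + 1) - f (a + n) - k := by
    simp only [hg, ← add_assoc]; push_cast; ring
  rw [Finset.sum_Ico_eq_sum_range]
  simp_rw [hfg]
  refine kusmin_landau_range hθ (fun n hn ↦ ?_) fun n hn ↦ ?_
  · have := hd (a + n) (Finset.mem_Ico.2 ⟨by lia, by lia⟩)
    rw [hdiff]
    exact ⟨by linarith [this.1], by linarith [this.2]⟩
  · rw [hdiff, hdiff]
    exact sub_le_sub_right (hmono (a + n) (by lia) (by lia)) _

lemma exists_eq_Ico_of_ordConnected {S : Finset ℕ} (hS : (S : Set ℕ).OrdConnected) :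
    ∃ a b, S = Finset.Ico a b := by
  rcases S.eq_empty_or_nonempty with rfl | hne
  · exact ⟨0, 0, rfl⟩
  · refine ⟨S.min' hne, S.max' hne + 1, Finset.ext fun n ↦ ?_⟩
    rw [Finset.mem_Ico, Nat.lt_succ_iff]
    exact ⟨fun hn ↦ ⟨S.min'_le n hn, S.le_max' n hn⟩,
      fun hn ↦ hS.out (S.min'_mem hne) (S.max'_mem hne) hn⟩

lemma mul_sub_le_sub_of_le_succ_sub {d : ℕ → ℝ} {N : ℕ} {l : ℝ}
    (hd : ∀ n, n + 1 < N → l ≤ d (n + 1) - d n) {a b : ℕ} (hab : a ≤ b) (hb : b < N) :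
    l * (b - a) ≤ d b - d a := by
  induction b, hab using Nat.le_induction with
  | base => simp
  | succ b _ ih =>
    push_cast
    linarith [ih (by lia), hd b hb]

lemma card_le_of_le_succ_sub {d : ℕ → ℝ} {N : ℕ} {l θ : ℝ} (hl : 0 < l) (hθ : 0 ≤ θ)
    (hd : ∀ n, n + 1 < N → l ≤ d (n + 1) - d n) {S : Finset ℕ} (hS : S ⊆ Finset.range N)
    (hSd : ∀ a ∈ S, ∀ b ∈ S, d b - d a ≤ θ) : (S.card : ℝ) ≤ θ / l + 1 := by
  rcases S.eq_empty_or_nonempty with rfl | hne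
  · simp only [Finset.card_empty, Nat.cast_zero]
    positivity
  set a := S.min' hne
  set b := S.max' hne
  have hab : a ≤ b := S.min'_le _ (S.max'_mem hne)
  have hcard : (S.card : ℝ) ≤ b - a + 1 := by
    have := Finset.card_le_card
      (fun n hn ↦ Finset.mem_Icc.2 ⟨S.min'_le n hn, S.le_max' n hn⟩ : S ⊆ Finset.Icc a b)
    rw [Nat.card_Icc] at this
    have : S.card + a ≤ b + 1 := by lia
    have : (S.card : ℝ) + a ≤ b + 1 := mod_cast this
    linarith
  have hlen : (b - a : ℝ) ≤ θ / l := by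
    rw [le_div_iff₀' hl]
    exact (mul_sub_le_sub_of_le_succ_sub hd hab
      (Finset.mem_range.1 (hS (S.max'_mem hne)))).trans
      (hSd a (S.min'_mem hne) b (S.max'_mem hne))
  linarith

lemma norm_sum_fourierChar_le_card (f : ℕ → ℝ) (S : Finset ℕ) :
    ‖∑ n ∈ S, (𝐞 (f n) : ℂ)‖ ≤ S.card := by
  simpa only [Circle.norm_coe, Finset.sum_const, nsmul_eq_mul, mul_one] using
    norm_sum_le S fun n ↦ (𝐞 (f n) : ℂ)

lemma norm_sum_fourierChar_filter_Icc_le {f : ℕ → ℝ} {N : ℕ} {θ : ℝ} (hθ : 0 < θ)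
    (hf : MonotoneOn (fun n ↦ f (n + 1) - f n) (Set.Iio N)) (k : ℤ) :
    ‖∑ n ∈ Finset.range N with k + θ ≤ f (n + 1) - f n ∧ f (n + 1) - f n ≤ k + 1 - θ,
      (𝐞 (f n) : ℂ)‖ ≤ 1 / θ := by
  set M := {n ∈ Finset.range N | k + θ ≤ f (n + 1) - f n ∧ f (n + 1) - f n ≤ k + 1 - θ} with hM
  have mem_M (n : ℕ) : n ∈ M ↔ n < N ∧ f (n + 1) - f n ∈ Set.Icc (k + θ) (k + 1 - θ) := by
    rw [hM, Finset.mem_filter, Finset.mem_range, Set.mem_Icc]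
  obtain ⟨a, b, hab⟩ := exists_eq_Ico_of_ordConnected (S := M) <| by
    refine ⟨fun a ha b hb n hn ↦ ?_⟩
    rw [Finset.mem_coe, mem_M] at ha hb ⊢
    have hnN := hn.2.trans_lt hb.1
    exact ⟨hnN, ha.2.1.trans (hf ha.1 hnN hn.1), (hf hnN hb.1 hn.2).trans hb.2.2⟩
  rw [hab] at mem_M ⊢
  refine kusmin_landau hθ k (fun n hn ↦ ((mem_M n).1 hn).2) fun n hn hnb ↦ ?_
  have hn₁ : n + 1 < N := ((mem_M (n + 1)).1 (Finset.mem_Ico.2 ⟨by lia, hnb⟩)).1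
  exact hf (Set.mem_Iio.2 (by lia)) hn₁ n.le_succ

lemma norm_sum_fourierChar_filter_floor_le {f : ℕ → ℝ} {N : ℕ} {l θ : ℝ} (hl : 0 < l)
    (hθ : 0 < θ) (hf : ∀ n, n + 1 < N → l ≤ (f (n + 2) - f (n + 1)) - (f (n + 1) - f n))
    (k : ℤ) :
    ‖∑ n ∈ Finset.range N with ⌊f (n + 1) - f n⌋ = k, (𝐞 (f n) : ℂ)‖ ≤
      2 * (θ / l + 1) + 1 / θ := by
  set d : ℕ → ℝ := fun n ↦ f (n + 1) - f n
  set F := {n ∈ Finset.range N | ⌊d n⌋ = k} with hF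
  set G := {n ∈ F | ¬ d n < k + θ} with hG
  have mem_F {n : ℕ} : n ∈ F ↔ n < N ∧ (k : ℝ) ≤ d n ∧ d n < k + 1 := by
    rw [hF, Finset.mem_filter, Finset.mem_range, Int.floor_eq_iff]
  have hmono : MonotoneOn d (Set.Iio N) := fun a _ b hb hab ↦ by
    have := mul_sub_le_sub_of_le_succ_sub (d := d) hf hab hb
    have : 0 ≤ l * ((b : ℝ) - a) := mul_nonneg hl.le (sub_nonneg.2 (mod_cast hab))
    linarith
  have hnear : ∀ S ⊆ F, (∀ a ∈ S, ∀ b ∈ S, d b - d a ≤ θ) →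
      ‖∑ n ∈ S, (𝐞 (f n) : ℂ)‖ ≤ θ / l + 1 := fun S hS hSd ↦
    (norm_sum_fourierChar_le_card f S).trans
      (card_le_of_le_succ_sub hl hθ.le hf (hS.trans (Finset.filter_subset _ _)) hSd)
  have hleft : ‖∑ n ∈ F with d n < k + θ, (𝐞 (f n) : ℂ)‖ ≤ θ / l + 1 := by
    refine hnear _ (Finset.filter_subset _ _) fun a ha b hb ↦ ?_
    rw [Finset.mem_filter, mem_F] at ha hb
    linarith
  have hright : ‖∑ n ∈ G with k + 1 - θ < d n, (𝐞 (f n) : ℂ)‖ ≤ θ / l + 1 := by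
    refine hnear _ ((Finset.filter_subset _ _).trans (Finset.filter_subset _ _))
      fun a ha b hb ↦ ?_
    rw [Finset.mem_filter, hG, Finset.mem_filter, mem_F] at ha hb
    linarith
  have hmiddle : {n ∈ G | ¬ k + 1 - θ < d n} =
      {n ∈ Finset.range N | k + θ ≤ d n ∧ d n ≤ k + 1 - θ} := by
    ext n
    simp only [hG, Finset.mem_filter, Finset.mem_range, mem_F, not_lt]
    exact ⟨fun h ↦ ⟨h.1.1.1, h.1.2, h.2⟩,
      fun h ↦ ⟨⟨⟨h.1, by linarith, by linarith⟩, h.2.1⟩, h.2.2⟩⟩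
  rw [← Finset.sum_filter_add_sum_filter_not F (fun n ↦ d n < k + θ),
    ← Finset.sum_filter_add_sum_filter_not G (fun n ↦ k + 1 - θ < d n), ← add_assoc, hmiddle]
  refine norm_add₃_le.trans ?_
  linarith [norm_sum_fourierChar_filter_Icc_le hθ hmono k]

theorem van_der_corput {f : ℕ → ℝ} {N : ℕ} {α β l : ℝ} (hαβ : α ≤ β) (hl : 0 < l)
    (hd : ∀ n < N, f (n + 1) - f n ∈ Set.Icc α β)
    (hf : ∀ n, n + 1 < N → l ≤ (f (n + 2) - f (n + 1)) - (f (n + 1) - f n)) :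
    ‖∑ n ∈ Finset.range N, (𝐞 (f n) : ℂ)‖ ≤ (β - α + 2) * (3 / √l + 2) := by
  have hfloor : ∀ n ∈ Finset.range N, ⌊f (n + 1) - f n⌋ ∈ Finset.Icc ⌊α⌋ ⌊β⌋ := fun n hn ↦
    have := hd n (Finset.mem_range.1 hn)
    Finset.mem_Icc.2 ⟨Int.floor_mono this.1, Int.floor_mono this.2⟩
  have hcard : ((Finset.Icc ⌊α⌋ ⌊β⌋).card : ℝ) ≤ β - α + 2 := by
    have h : (((⌊β⌋ + 1 - ⌊α⌋).toNat : ℤ) : ℝ) = ⌊β⌋ + 1 - ⌊α⌋ := by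
      rw [Int.toNat_of_nonneg (by linarith [Int.floor_mono hαβ])]
      push_cast
      rfl
    rw [Int.card_Icc, ← Int.cast_natCast, h]
    linarith [Int.floor_le β, Int.lt_floor_add_one α]
  have hsqrt : 2 * (√l / l + 1) + 1 / √l = 3 / √l + 2 := by
    rw [sqrt_div_self]
    ring
  rw [← Finset.sum_fiberwise_of_maps_to hfloor]
  calc _ ≤ ∑ k ∈ Finset.Icc ⌊α⌋ ⌊β⌋, (3 / √l + 2) :=
        norm_sum_le_of_le _ fun k _ ↦
          (norm_sum_fourierChar_filter_floor_le hl (sqrt_pos.2 hl) hf k).trans_eq hsqrt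
    _ ≤ (β - α + 2) * (3 / √l + 2) := by
        rw [Finset.sum_const, nsmul_eq_mul]
        exact mul_le_mul_of_nonneg_right hcard (by positivity)

end ExponentialSums

section Sawtooth

lemma bernoulliFun_two_fract_le (t : ℝ) :
    bernoulliFun 2 (Int.fract t) ≤ bernoulliFun 2 t := by
  have hfract₀ := Int.fract_nonneg t
  have hfract₁ := (Int.fract_lt_one t).le
  have hfloor : (0 : ℝ) ≤ ⌊t⌋ * (⌊t⌋ + 2 * Int.fract t - 1) := by
    rcases lt_trichotomy ⌊t⌋ 0 with h | h | h
    · have : (⌊t⌋ : ℝ) ≤ -1 := mod_cast Int.le_sub_one_of_lt h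
      exact mul_nonneg_of_nonpos_of_nonpos (by linarith) (by linarith)
    · simp [h]
    · have : (1 : ℝ) ≤ ⌊t⌋ := mod_cast h
      exact mul_nonneg (by linarith) (by linarith)
  rw [bernoulliFun_two, bernoulliFun_two]
  conv_rhs => rw [← Int.floor_add_fract t]
  linarith

lemma bernoulliFun_two_fract_add_sub_le (t σ : ℝ) :
    bernoulliFun 2 (Int.fract (t + σ)) - bernoulliFun 2 (Int.fract t) ≤
      2 * σ * (Int.fract t - 1 / 2) + σ ^ 2 := by
  have hshift : Int.fract (t + σ) = Int.fract (Int.fract t + σ) := by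
    rw [← Int.fract_add_intCast (Int.fract t + σ) ⌊t⌋, add_right_comm, Int.fract_add_floor]
  have := bernoulliFun_two_fract_le (Int.fract t + σ)
  rw [hshift, bernoulliFun_two (Int.fract t)]
  rw [bernoulliFun_two (Int.fract t + σ)] at this
  linarith

lemma fourierChar_natCast_mul_fract (h : ℕ) (t : ℝ) : 𝐞 (h * Int.fract t) = 𝐞 (h * t) := by
  have : (h * t : ℝ) = h * Int.fract t + ((h * ⌊t⌋ : ℤ) : ℝ) := by
    push_cast
    rw [← mul_add, Int.fract_add_floor]
  rw [this, AddChar.map_add_eq_mul, fourierChar_intCast, mul_one]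

lemma hasSum_re_fourierChar_div_sq (t : ℝ) :
    HasSum (fun h : ℕ ↦ 1 / (h : ℝ) ^ 2 * (𝐞 (h * t) : ℂ).re)
      (π ^ 2 * bernoulliFun 2 (Int.fract t)) := by
  convert! hasSum_one_div_nat_pow_mul_cos one_ne_zero
    ⟨Int.fract_nonneg t, (Int.fract_lt_one t).le⟩ using 1
  · funext h
    rw [← fourierChar_natCast_mul_fract, fourierChar_apply, Complex.exp_ofReal_mul_I_re, mul_one]
    simp only [mul_assoc]
  · rw [← bernoulliFun, mul_one, Nat.factorial_two, Nat.cast_two]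
    ring

lemma hasSum_sum_fourierChar_mul_sub_one {ι : Type*} (s : Finset ι) (t : ι → ℝ) (σ : ℝ) :
    HasSum (fun h : ℕ ↦
        1 / (h : ℝ) ^ 2 * ((∑ n ∈ s, (𝐞 (h * t n) : ℂ)) * (𝐞 (h * σ) - 1)).re)
      (π ^ 2 * ∑ n ∈ s, (bernoulliFun 2 (Int.fract (t n + σ)) -
        bernoulliFun 2 (Int.fract (t n)))) := by
  convert! hasSum_sum fun n (_ : n ∈ s) ↦ (hasSum_re_fourierChar_div_sq (t n + σ)).sub
    (hasSum_re_fourierChar_div_sq (t n)) using 1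
  · funext h
    rw [Finset.sum_mul, Complex.re_sum, Finset.mul_sum]
    refine Finset.sum_congr rfl fun n _ ↦ ?_
    rw [← mul_sub, ← Complex.sub_re, mul_add (h : ℝ), AddChar.map_add_eq_mul, Circle.coe_mul,
      mul_sub_one]
  · rw [Finset.mul_sum]
    simp only [mul_sub]

lemma sum_range_one_div_sqrt_le (m : ℕ) :
    ∑ h ∈ Finset.range m, 1 / √(h + 1 : ℝ) ≤ 2 * √m := by
  have hstep (h : ℕ) : 1 / √(h + 1 : ℝ) ≤ 2 * √((h + 1 : ℕ) : ℝ) - 2 * √h := by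
    rw [Nat.cast_add_one, div_le_iff₀ (by positivity)]
    nlinarith [sq_nonneg (√(h + 1 : ℝ) - √h), sq_sqrt (h.cast_nonneg : (0 : ℝ) ≤ h),
      sq_sqrt (by positivity : (0 : ℝ) ≤ h + 1)]
  calc _ ≤ ∑ h ∈ Finset.range m, (2 * √((h + 1 : ℕ) : ℝ) - 2 * √h) :=
        Finset.sum_le_sum fun h _ ↦ hstep h
    _ = 2 * √m := by
        rw [Finset.sum_range_sub fun h : ℕ ↦ 2 * √(h : ℝ)]
        simp

lemma one_div_mul_sqrt_le_sub {x : ℝ} (hx : 0 < x) :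
    1 / ((x + 1) * √(x + 1)) ≤ 2 / √x - 2 / √(x + 1) := by
  have hp : 0 < √x := sqrt_pos.2 hx
  have hpq : √x ≤ √(x + 1) := sqrt_le_sqrt (by linarith)
  have hp₂ : √x ^ 2 = x := sq_sqrt hx.le
  have hq₂ : √(x + 1) ^ 2 = x + 1 := sq_sqrt (by linarith)
  rw [div_sub_div _ _ hp.ne' (by positivity), div_le_div_iff₀ (by positivity) (by positivity)]
  set p := √x
  set q := √(x + 1)
  have hdiff : 1 ≤ (2 * q - 2 * p) * q := by nlinarith
  calc 1 * (p * q) ≤ 1 * q ^ 2 := by nlinarith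
    _ ≤ ((2 * q - 2 * p) * q) * q ^ 2 := mul_le_mul_of_nonneg_right hdiff (by positivity)
    _ = (2 * q - p * 2) * ((x + 1) * q) := by rw [← hq₂]; ring

lemma sum_Ico_one_div_mul_sqrt_le {H m : ℕ} (hH : 0 < H) (hm : H ≤ m) :
    ∑ h ∈ Finset.Ico H m, 1 / ((h + 1) * √(h + 1 : ℝ)) ≤ 2 / √H := by
  calc _ ≤ ∑ h ∈ Finset.Ico H m, (2 / √(h : ℝ) - 2 / √((h + 1 : ℕ) : ℝ)) :=
        Finset.sum_le_sum fun h hh ↦ by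
          have hh₀ : 0 < h := hH.trans_le (Finset.mem_Ico.1 hh).1
          rw [Nat.cast_add_one]
          exact one_div_mul_sqrt_le_sub (mod_cast hh₀)
    _ = 2 / √H - 2 / √m := by
        rw [Finset.sum_Ico_eq_sub _ hm, Finset.sum_range_sub' fun h : ℕ ↦ 2 / √(h : ℝ),
          Finset.sum_range_sub' fun h : ℕ ↦ 2 / √(h : ℝ)]
        ring
    _ ≤ 2 / √H := sub_le_self _ (by positivity)

lemma sum_range_min_div_mul_sqrt_le {H m : ℕ} (hH : 0 < H) (hm : H ≤ m) :
    ∑ h ∈ Finset.range m, min (2 * π * ((h + 1) / H)) 2 / ((h + 1) * √(h + 1 : ℝ)) ≤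
      (4 * π + 4) / √H := by
  have : (0 : ℝ) < H := mod_cast hH
  rw [← Finset.sum_range_add_sum_Ico _ hm, add_div]
  refine add_le_add ?_ ?_
  · calc _ ≤ ∑ h ∈ Finset.range H, 2 * π / H * (1 / √(h + 1 : ℝ)) :=
          Finset.sum_le_sum fun h _ ↦ by
            refine (div_le_div_of_nonneg_right (min_le_left _ _) (by positivity)).trans_eq ?_
            field_simp
      _ ≤ 2 * π / H * (2 * √H) := by
          rw [← Finset.mul_sum]
          exact mul_le_mul_of_nonneg_left (sum_range_one_div_sqrt_le H) (by positivity)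
      _ = 4 * π / √H := by
          rw [div_eq_mul_inv _ √(H : ℝ), ← sqrt_div_self]
          ring
  · calc _ ≤ ∑ h ∈ Finset.Ico H m, 2 * (1 / ((h + 1) * √(h + 1 : ℝ))) :=
          Finset.sum_le_sum fun h _ ↦ by
            rw [mul_one_div]
            exact div_le_div_of_nonneg_right (min_le_right _ _) (by positivity)
      _ ≤ 2 * (2 / √H) := by
          rw [← Finset.mul_sum]
          exact mul_le_mul_of_nonneg_left (sum_Ico_one_div_mul_sqrt_le hH hm) zero_le_two
      _ = 4 / √H := by ring

lemma norm_fourierChar_sub_one_le_min (h : ℕ) {σ : ℝ} {H : ℕ} (hσ : |σ| ≤ 1 / H) :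
    ‖(𝐞 (h * σ) : ℂ) - 1‖ ≤ min (2 * π * (h / H)) 2 := by
  refine le_min ?_ ?_
  · rw [norm_sub_rev]
    refine (norm_one_sub_fourierChar_le _).trans ?_
    rw [abs_mul, Nat.abs_cast, div_eq_mul_one_div (h : ℝ)]
    gcongr
  · refine (norm_sub_le _ _).trans_eq ?_
    rw [Circle.norm_coe, norm_one, one_add_one_eq_two]

section

variable {ι : Type*} {s : Finset ι} {t : ι → ℝ} {H : ℕ} {T : ℝ}

lemma abs_sum_bernoulliFun_two_fract_sub_le {σ : ℝ} (hH : 0 < H) (hσ : |σ| ≤ 1 / H)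
    (hT : ∀ h : ℕ, 1 ≤ h → ‖∑ n ∈ s, (𝐞 (h * t n) : ℂ)‖ ≤ T * √h) :
    |∑ n ∈ s, (bernoulliFun 2 (Int.fract (t n + σ)) - bernoulliFun 2 (Int.fract (t n)))| ≤
      2 * T / √H := by
  set S : ℕ → ℂ := fun h ↦ ∑ n ∈ s, (𝐞 (h * t n) : ℂ)
  have hT₀ : 0 ≤ T := by simpa using (norm_nonneg _).trans (hT 1 le_rfl)
  have hterm (h : ℕ) : |1 / ((h + 1 : ℕ) : ℝ) ^ 2 *
      (S (h + 1) * (𝐞 ((h + 1 : ℕ) * σ) - 1)).re| ≤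
        T * (min (2 * π * ((h + 1) / H)) 2 / ((h + 1) * √(h + 1 : ℝ))) := by
    have hsqrt : √(h + 1 : ℝ) ^ 2 = h + 1 := sq_sqrt (by positivity)
    have hre := (Complex.abs_re_le_norm (S (h + 1) * (𝐞 ((h + 1 : ℕ) * σ) - 1))).trans <|
      (norm_mul _ _).trans_le <| mul_le_mul (hT (h + 1) (by lia))
        (norm_fourierChar_sub_one_le_min (h + 1) hσ) (norm_nonneg _) (by positivity)
    rw [abs_mul, abs_of_nonneg (by positivity)]
    refine (mul_le_mul_of_nonneg_left hre (by positivity)).trans_eq ?_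
    push_cast
    field_simp
    rw [hsqrt, mul_comm]
  have hbound : |π ^ 2 * ∑ n ∈ s, (bernoulliFun 2 (Int.fract (t n + σ)) -
      bernoulliFun 2 (Int.fract (t n)))| ≤ T * ((4 * π + 4) / √H) := by
    refine le_of_tendsto (hasSum_sum_fourierChar_mul_sub_one s t σ).tendsto_sum_nat.abs ?_
    filter_upwards [eventually_ge_atTop (H + 1)] with m hm
    obtain ⟨m, rfl⟩ : ∃ p, m = p + 1 := ⟨m - 1, by lia⟩
    rw [Finset.sum_range_succ', Nat.cast_zero, zero_pow two_ne_zero, div_zero, zero_mul, add_zero]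
    refine (Finset.abs_sum_le_sum_abs _ _).trans
      ((Finset.sum_le_sum fun h _ ↦ hterm h).trans ?_)
    rw [← Finset.mul_sum]
    exact mul_le_mul_of_nonneg_left (sum_range_min_div_mul_sqrt_le hH (by lia)) hT₀
  rw [abs_mul, abs_of_pos (by positivity)] at hbound
  refine le_of_mul_le_mul_left (hbound.trans ?_) (by positivity : 0 < π ^ 2)
  calc T * ((4 * π + 4) / √H) = (4 * π + 4) * (T / √H) := by ring
    _ ≤ 2 * π ^ 2 * (T / √H) :=
        mul_le_mul_of_nonneg_right (by nlinarith [pi_gt_three]) (by positivity)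
    _ = π ^ 2 * (2 * T / √H) := by ring

-- The differences of `B₂({t})` at step `±1/H` bound the sawtooth `{t} - 1/2` from both sides, up
-- to an error `1/H` per term, and their Fourier series converge absolutely.
theorem abs_sum_fract_sub_half_le (hH : 0 < H)
    (hT : ∀ h : ℕ, 1 ≤ h → ‖∑ n ∈ s, (𝐞 (h * t n) : ℂ)‖ ≤ T * √h) :
    |∑ n ∈ s, (Int.fract (t n) - 1 / 2)| ≤ s.card / H + T * √H := by
  have hH' : (0 : ℝ) < H := mod_cast hH
  have key {σ : ℝ} (hσ : |σ| = 1 / H) :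
      -(2 * σ * ∑ n ∈ s, (Int.fract (t n) - 1 / 2)) ≤ 2 * T / √H + s.card * (1 / H) ^ 2 := by
    have hlower := neg_le_of_abs_le (abs_sum_bernoulliFun_two_fract_sub_le hH hσ.le hT)
    have hupper := Finset.sum_le_sum fun n (_ : n ∈ s) ↦
      bernoulliFun_two_fract_add_sub_le (t n) σ
    rw [Finset.sum_add_distrib, ← Finset.mul_sum, Finset.sum_const, nsmul_eq_mul, ← sq_abs σ,
      hσ] at hupper
    linarith
  have hneg := key (σ := -(1 / H)) (by rw [abs_neg, abs_of_pos (by positivity)])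
  have hpos := key (σ := 1 / H) (abs_of_pos (by positivity))
  set X := ∑ n ∈ s, (Int.fract (t n) - 1 / 2)
  have hsqrt : √(H : ℝ) ^ 2 = H := sq_sqrt hH'.le
  have hcard : (0 : ℝ) ≤ s.card / (2 * H) := by positivity
  calc |X| = H / 2 * |2 * (1 / H) * X| := by
        rw [abs_mul, abs_of_pos (by positivity : (0 : ℝ) < 2 * (1 / H))]
        field_simp
    _ ≤ H / 2 * (2 * T / √H + s.card * (1 / H) ^ 2) := by
        refine mul_le_mul_of_nonneg_left (abs_le.2 ⟨?_, ?_⟩) (by positivity) <;> linarith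
    _ = s.card / (2 * H) + T * √H := by
        field_simp
        linear_combination -(2 * H * T) * hsqrt
    _ ≤ s.card / H + T * √H := by
        gcongr
        linarith

end

end Sawtooth

section CircleDifferences

variable {x t : ℝ}

lemma sq_le_half_of_le_sqrt_half (hx : 0 ≤ x) (ht₀ : 0 ≤ t) (ht : t ≤ √(x / 2)) :
    t ^ 2 ≤ x / 2 :=
  (le_sqrt ht₀ (by positivity)).1 ht

lemma sqrt_half_le_sqrt_sub_sq (hx : 0 ≤ x) (ht₀ : 0 ≤ t) (ht : t ≤ √(x / 2)) :
    √(x / 2) ≤ √(x - t ^ 2) :=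
  sqrt_le_sqrt (by linarith [sq_le_half_of_le_sqrt_half hx ht₀ ht])

lemma sqrt_sub_sq_sub_mem_Icc (hx : 0 < x) (ht₀ : 0 ≤ t) (ht : t + 1 ≤ √(x / 2)) :
    √(x - t ^ 2) - √(x - (t + 1) ^ 2) ∈ Set.Icc 0 1 := by
  have hp := sqrt_half_le_sqrt_sub_sq hx.le ht₀ (by linarith)
  have hq := sqrt_half_le_sqrt_sub_sq hx.le (by positivity) ht
  have hp₂ : √(x - t ^ 2) ^ 2 = x - t ^ 2 :=
    sq_sqrt (by nlinarith [sq_le_half_of_le_sqrt_half hx.le (by positivity) ht])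
  have hq₂ : √(x - (t + 1) ^ 2) ^ 2 = x - (t + 1) ^ 2 :=
    sq_sqrt (by nlinarith [sq_le_half_of_le_sqrt_half hx.le (by positivity) ht])
  have : 0 < √(x / 2) := sqrt_pos.2 (by positivity)
  refine ⟨sub_nonneg.2 (sqrt_le_sqrt (by nlinarith)), ?_⟩
  by_contra! h
  nlinarith

-- The squares `p²`, `q²`, `r²` of three consecutive values satisfy `p² + r² = 2q² - 2`.
lemma one_div_sqrt_le_second_difference (hx : 0 < x) (ht₀ : 0 ≤ t) (ht : t + 2 ≤ √(x / 2)) :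
    1 / √x ≤ 2 * √(x - (t + 1) ^ 2) - √(x - t ^ 2) - √(x - (t + 2) ^ 2) := by
  have hle : (t + 2) ^ 2 ≤ x / 2 := sq_le_half_of_le_sqrt_half hx.le (by positivity) ht
  have hp₂ : √(x - t ^ 2) ^ 2 = x - t ^ 2 := sq_sqrt (by nlinarith)
  have hq₂ : √(x - (t + 1) ^ 2) ^ 2 = x - (t + 1) ^ 2 := sq_sqrt (by nlinarith)
  have hr₂ : √(x - (t + 2) ^ 2) ^ 2 = x - (t + 2) ^ 2 := sq_sqrt (by nlinarith)
  have hqx : √(x - (t + 1) ^ 2) ≤ √x := sqrt_le_sqrt (by nlinarith)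
  have hq : 0 < √(x - (t + 1) ^ 2) := sqrt_pos.2 (by nlinarith)
  have hp := sqrt_nonneg (x - t ^ 2)
  have hr := sqrt_nonneg (x - (t + 2) ^ 2)
  set p := √(x - t ^ 2)
  set q := √(x - (t + 1) ^ 2)
  set r := √(x - (t + 2) ^ 2)
  have : p ^ 2 + r ^ 2 = 2 * q ^ 2 - 2 := by rw [hp₂, hq₂, hr₂]; ring
  have hprod : 4 ≤ (2 * q - (p + r)) * (2 * q + (p + r)) := by
    linarith [sq_nonneg (p - r)]
  have hgap : 0 ≤ 2 * q - (p + r) := by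
    by_contra! h
    linarith [mul_nonpos_of_nonpos_of_nonneg h.le (by positivity : 0 ≤ 2 * q + (p + r))]
  rw [div_le_iff₀ (sqrt_pos.2 hx)]
  linarith [mul_le_mul_of_nonneg_left (by linarith : 2 * q + (p + r) ≤ 4 * √x) hgap]

end CircleDifferences

section CircleSawtooth

lemma norm_sum_fourierChar_neg (f : ℕ → ℝ) (s : Finset ℕ) :
    ‖∑ n ∈ s, (𝐞 (-f n) : ℂ)‖ = ‖∑ n ∈ s, (𝐞 (f n) : ℂ)‖ := by
  rw [← Complex.norm_conj, map_sum]
  simp only [AddChar.map_neg_eq_inv, Circle.coe_inv_eq_conj, Complex.conj_conj]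

variable {x : ℝ}

lemma norm_sum_fourierChar_mul_sqrt_sub_sq_le (hx : 1 ≤ x) {h : ℕ} (hh : 1 ≤ h) :
    ‖∑ n ∈ Finset.range ⌊√(x / 2)⌋₊, (𝐞 (h * √(x - n ^ 2)) : ℂ)‖ ≤ 15 * √(√x) * √h := by
  have hM : (⌊√(x / 2)⌋₊ : ℝ) ≤ √(x / 2) := Nat.floor_le (sqrt_nonneg _)
  have hh' : (1 : ℝ) ≤ h := mod_cast hh
  have hx₀ : 0 < x := by linarith
  have hR₀ : 0 < √(√x) := sqrt_pos.2 (sqrt_pos.2 hx₀)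
  have hR₂ : √(√x) ^ 2 = √x := sq_sqrt (sqrt_nonneg x)
  have hs₁ : 1 ≤ √(h : ℝ) := one_le_sqrt.2 hh'
  have hs₂ : √(h : ℝ) ^ 2 = h := sq_sqrt h.cast_nonneg
  rcases le_total √(h : ℝ) √(√x) with hc | hc
  · have hvdc : ‖∑ n ∈ Finset.range ⌊√(x / 2)⌋₊, (𝐞 (-(h * √(x - n ^ 2))) : ℂ)‖ ≤
        (h - 0 + 2) * (3 / √(h / √x) + 2) := by
      refine van_der_corput (by positivity) (by positivity) (fun n hn ↦ ?_) (fun n hn ↦ ?_)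
      · have hn' : (n : ℝ) + 1 ≤ √(x / 2) := le_trans (mod_cast hn) hM
        obtain ⟨h₁, h₂⟩ := sqrt_sub_sq_sub_mem_Icc hx₀ n.cast_nonneg hn'
        push_cast
        constructor <;> nlinarith
      · have hn' : (n : ℝ) + 2 ≤ √(x / 2) := le_trans (mod_cast hn) hM
        have := mul_le_mul_of_nonneg_left
          (one_div_sqrt_le_second_difference hx₀ n.cast_nonneg hn') h.cast_nonneg
        rw [mul_one_div] at this
        push_cast
        linarith
    rw [← norm_sum_fourierChar_neg]
    calc _ ≤ ((h : ℝ) - 0 + 2) * (3 / √(h / √x) + 2) := hvdc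
      _ ≤ 3 * h * (5 * √(√x) / √h) := by
          rw [sqrt_div h.cast_nonneg, div_div_eq_mul_div, div_add' _ _ _ (by positivity)]
          gcongr <;> linarith
      _ = 15 * √(√x) * √h := by
          field_simp
          rw [hs₂]
          ring
  · calc _ ≤ ((Finset.range ⌊√(x / 2)⌋₊).card : ℝ) :=
          norm_sum_fourierChar_le_card (fun n ↦ h * √(x - n ^ 2)) _
      _ ≤ √x := by
          rw [Finset.card_range]
          exact hM.trans (sqrt_le_sqrt (by linarith))
      _ ≤ 15 * √(√x) * √h := by nlinarith

lemma abs_sum_fract_sqrt_sub_sq_le (hx : 1 ≤ x) :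
    |∑ n ∈ Finset.range ⌊√(x / 2)⌋₊, (Int.fract √(x - n ^ 2) - 1 / 2)| ≤
      31 * x ^ (1 / 3 : ℝ) := by
  have hx₀ : 0 ≤ x := by linarith
  obtain ⟨y, hy₁, rfl⟩ : ∃ y, 1 ≤ y ∧ y ^ 6 = x :=
    ⟨x ^ (1 / 6 : ℝ), one_le_rpow hx (by norm_num), by
      rw [← rpow_mul_natCast hx₀]; norm_num⟩
  have hy₀ : 0 ≤ y := by linarith
  have hcbrt : (y ^ 6) ^ (1 / 3 : ℝ) = y ^ 2 := by
    rw [← rpow_natCast_mul hy₀, ← rpow_natCast]; norm_num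
  have hsqrt : √(y ^ 6) = y ^ 3 := by
    rw [show y ^ 6 = (y ^ 3) ^ 2 by ring, sqrt_sq (by positivity)]
  have hfloor : (⌊√(y ^ 6 / 2)⌋₊ : ℝ) ≤ y ^ 3 :=
    (Nat.floor_le (sqrt_nonneg _)).trans <|
      (sqrt_le_sqrt (half_le_self (by positivity))).trans_eq hsqrt
  have hle : y ≤ ⌈y⌉₊ := Nat.le_ceil y
  have hge : (⌈y⌉₊ : ℝ) ≤ 2 * y := by linarith [Nat.ceil_lt_add_one hy₀]
  have hdiv : (⌊√(y ^ 6 / 2)⌋₊ : ℝ) / ⌈y⌉₊ ≤ y ^ 2 := by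
    rw [div_le_iff₀ (by linarith)]
    nlinarith [mul_le_mul_of_nonneg_left hle (sq_nonneg y)]
  have hmul : √(√(y ^ 6)) * √⌈y⌉₊ ≤ 2 * y ^ 2 := by
    rw [hsqrt, ← sqrt_mul (by positivity), sqrt_le_left (by positivity)]
    nlinarith [mul_le_mul_of_nonneg_left hge (by positivity : 0 ≤ y ^ 3), pow_nonneg hy₀ 4]
  have hH : 0 < ⌈y⌉₊ := Nat.ceil_pos.2 (by linarith)
  refine (abs_sum_fract_sub_half_le hH fun h hh ↦
    norm_sum_fourierChar_mul_sqrt_sub_sq_le hx hh).trans ?_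
  rw [Finset.card_range, hcbrt]
  linarith

end CircleSawtooth

section TrapezoidalRule

variable {f : ℝ → ℝ} {a : ℝ}

lemma integral_zero_one_add_mul (p q : ℝ) : ∫ s in (0 : ℝ)..1, (p + s * q) = p + q / 2 := by
  rw [intervalIntegral.integral_add (by simp) (Continuous.intervalIntegrable (by fun_prop) _ _),
    intervalIntegral.integral_mul_const, integral_id, intervalIntegral.integral_const]
  norm_num
  ring

lemma add_mul_le_of_concaveOn (hf : ConcaveOn ℝ (Set.Icc a (a + 1)) f) {s : ℝ}
    (hs : s ∈ Set.Icc (0 : ℝ) 1) : f a + s * (f (a + 1) - f a) ≤ f (a + s) := by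
  have := hf.2 (Set.left_mem_Icc.2 (by linarith)) (Set.right_mem_Icc.2 (by linarith))
    (sub_nonneg.2 hs.2) hs.1 (by ring)
  simp only [smul_eq_mul] at this
  rw [show (1 - s) * a + s * (a + 1) = a + s by ring] at this
  linarith

lemma le_add_mul_of_concaveOn (hf : ConcaveOn ℝ (Set.Icc (a - 1) (a + 1)) f) {s : ℝ}
    (hs : s ∈ Set.Icc (0 : ℝ) 1) : f (a + s) ≤ f a + s * (f a - f (a - 1)) := by
  obtain ⟨hs₀, hs₁⟩ := hs
  have hs' : 1 + s ≠ 0 := by positivity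
  have := hf.2 (⟨by linarith, by linarith⟩ : a + s ∈ Set.Icc (a - 1) (a + 1))
    (Set.left_mem_Icc.2 (by linarith)) (by positivity : 0 ≤ 1 / (1 + s))
    (by positivity : 0 ≤ s / (1 + s)) (by field_simp)
  simp only [smul_eq_mul] at this
  rw [show 1 / (1 + s) * (a + s) + s / (1 + s) * (a - 1) = a by field_simp; ring,
    div_mul_eq_mul_div, div_mul_eq_mul_div, ← add_div, div_le_iff₀ (by positivity)] at this
  linarith

lemma integral_add_one_mem_Icc_of_concaveOn (hf : ConcaveOn ℝ (Set.Icc (a - 1) (a + 1)) f)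
    (hi : IntervalIntegrable f MeasureTheory.volume a (a + 1)) :
    ∫ t in a..a + 1, f t ∈
      Set.Icc ((f a + f (a + 1)) / 2) (f a + (f a - f (a - 1)) / 2) := by
  have hf' : ConcaveOn ℝ (Set.Icc a (a + 1)) f :=
    hf.subset (Set.Icc_subset_Icc_left (by linarith)) (convex_Icc _ _)
  have hshift : ∫ t in a..a + 1, f t = ∫ s in (0 : ℝ)..1, f (a + s) := by
    rw [intervalIntegral.integral_comp_add_left f a, add_zero]
  have hi' : IntervalIntegrable (fun s ↦ f (a + s)) MeasureTheory.volume 0 1 := by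
    simpa using hi.comp_add_left a
  have hlin (p q : ℝ) : IntervalIntegrable (fun s ↦ p + s * q) MeasureTheory.volume 0 1 :=
    Continuous.intervalIntegrable (by fun_prop) _ _
  rw [hshift]
  constructor
  · refine Eq.trans_le ?_ (intervalIntegral.integral_mono_on zero_le_one (hlin _ _) hi'
      fun s hs ↦ add_mul_le_of_concaveOn hf' hs)
    rw [integral_zero_one_add_mul]
    ring
  · refine (intervalIntegral.integral_mono_on zero_le_one hi' (hlin _ _)
      fun s hs ↦ le_add_mul_of_concaveOn hf hs).trans_eq ?_
    rw [integral_zero_one_add_mul]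

theorem integral_sub_trapezoidal_mem_Icc_of_concaveOn {M : ℕ}
    (hf : ConcaveOn ℝ (Set.Icc (-1) (M : ℝ)) f)
    (hi : ∀ n < M, IntervalIntegrable f MeasureTheory.volume n (n + 1 : ℕ)) :
    (∫ t in (0 : ℝ)..M, f t) - (∑ n ∈ Finset.range M, f n + (f M - f 0) / 2) ∈
      Set.Icc 0 (((f 0 - f (-1)) - (f M - f (M - 1))) / 2) := by
  have hstep (n : ℕ) (hn : n < M) := integral_add_one_mem_Icc_of_concaveOn (a := n)
    (hf.subset (Set.Icc_subset_Icc (by linarith [n.cast_nonneg (α := ℝ)]) (mod_cast hn))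
      (convex_Icc _ _)) (by simpa using hi n hn)
  have htele : ∑ n ∈ Finset.range M, (f n + f (n + 1)) / 2 =
      ∑ n ∈ Finset.range M, f n + (f M - f 0) / 2 := by
    have := Finset.sum_range_sub (fun n : ℕ ↦ f n) M
    push_cast at this
    rw [← this, Finset.sum_div, ← Finset.sum_add_distrib]
    exact Finset.sum_congr rfl fun n _ ↦ by ring
  have htele' : ∑ n ∈ Finset.range M, ((f n - f (n - 1)) - (f (n + 1) - f n)) / 2 =
      ((f 0 - f (-1)) - (f M - f (M - 1))) / 2 := by
    have := Finset.sum_range_sub' (fun n : ℕ ↦ f n - f (n - 1)) M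
    push_cast at this
    simp only [add_sub_cancel_right, zero_sub] at this
    rw [← Finset.sum_div, this]
  have hsplit : ∫ t in (0 : ℝ)..M, f t = ∑ n ∈ Finset.range M, ∫ t in (n : ℝ)..n + 1, f t := by
    have := intervalIntegral.sum_integral_adjacent_intervals hi
    push_cast at this
    exact this.symm
  rw [hsplit, ← htele, ← htele', ← Finset.sum_sub_distrib]
  refine ⟨Finset.sum_nonneg fun n hn ↦ ?_, Finset.sum_le_sum fun n hn ↦ ?_⟩ <;>
  · obtain ⟨h₁, h₂⟩ := hstep n (Finset.mem_range.1 hn)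
    linarith

end TrapezoidalRule

section CircleIntegral

variable {x : ℝ}

lemma concaveOn_sqrt_sub_sq : ConcaveOn ℝ {t : ℝ | t ^ 2 ≤ x} fun t ↦ √(x - t ^ 2) := by
  refine ⟨?_, fun s hs t ht a b ha hb hab ↦ le_sqrt_of_sq_le ?_⟩
  · simpa using (even_two.convexOn_pow (𝕜 := ℝ)).convex_le x
  · have hs₂ : √(x - s ^ 2) ^ 2 = x - s ^ 2 := sq_sqrt (sub_nonneg.2 hs)
    have ht₂ : √(x - t ^ 2) ^ 2 = x - t ^ 2 := sq_sqrt (sub_nonneg.2 ht)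
    obtain rfl : b = 1 - a := by linarith
    simp only [smul_eq_mul]
    nlinarith [mul_nonneg (mul_nonneg ha hb) (sq_nonneg (s - t)),
      mul_nonneg (mul_nonneg ha hb) (sq_nonneg (√(x - s ^ 2) - √(x - t ^ 2)))]

lemma integral_sqrt_sub_sq (hx : 0 ≤ x) :
    ∫ t in (0 : ℝ)..√(x / 2), √(x - t ^ 2) = (π / 8 + 1 / 4) * x := by
  have hsq : √x ^ 2 = x := sq_sqrt hx
  have hend : √x * sin (π / 4) = √(x / 2) := by
    rw [sin_pi_div_four, sqrt_div hx, sqrt_div_self', mul_one_div]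
  have hsubst := intervalIntegral.integral_comp_mul_deriv (a := 0) (b := π / 4)
    (f := fun θ ↦ √x * sin θ) (f' := fun θ ↦ √x * cos θ) (g := fun t ↦ √(x - t ^ 2))
    (fun θ _ ↦ (hasDerivAt_sin θ).const_mul _) (by fun_prop) (by fun_prop)
  have hcos : ∀ θ ∈ Set.uIcc 0 (π / 4), √(x - (√x * sin θ) ^ 2) * (√x * cos θ) = x * cos θ ^ 2 := by
    intro θ hθ
    rw [Set.uIcc_of_le (by positivity)] at hθ
    have hcos₀ : 0 ≤ cos θ :=
      cos_nonneg_of_mem_Icc ⟨by linarith [hθ.1, pi_pos], by linarith [hθ.2, pi_pos]⟩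
    rw [show x - (√x * sin θ) ^ 2 = (√x * cos θ) ^ 2 by
      rw [mul_pow, mul_pow, hsq, cos_sq']; ring, sqrt_sq (by positivity), ← sq, mul_pow, hsq]
  simp only [Function.comp_apply, sin_zero, mul_zero, hend] at hsubst
  rw [← hsubst, intervalIntegral.integral_congr hcos,
    intervalIntegral.integral_const_mul, integral_cos_sq]
  have : √2 ^ 2 = (2 : ℝ) := sq_sqrt zero_le_two
  rw [cos_pi_div_four, sin_pi_div_four, sin_zero]
  linear_combination x / 8 * this

end CircleIntegral

section QuarterDisc

/-- The lattice points `(a, b)` with `a ≥ 1`, `b ≥ 0` and `a² + b² ≤ x`. The corresponding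
`a + b i` represent the nonzero Gaussian integers of norm at most `x` up to units. -/
noncomputable def quarterDisc (x : ℝ) : Finset (ℕ × ℕ) :=
  {p ∈ Finset.Icc 1 ⌊√x⌋₊ ×ˢ Finset.range (⌊√x⌋₊ + 1) | (p.1 ^ 2 + p.2 ^ 2 : ℝ) ≤ x}

variable {x : ℝ}

lemma mem_quarterDisc {p : ℕ × ℕ} :
    p ∈ quarterDisc x ↔ 1 ≤ p.1 ∧ (p.1 ^ 2 + p.2 ^ 2 : ℝ) ≤ x := by
  have hle {n : ℕ} (hn : (n : ℝ) ^ 2 ≤ x) : n ≤ ⌊√x⌋₊ := Nat.le_floor (le_sqrt_of_sq_le hn)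
  simp only [quarterDisc, Finset.mem_filter, Finset.mem_product, Finset.mem_Icc,
    Finset.mem_range, Nat.lt_succ_iff]
  refine ⟨fun h ↦ ⟨h.1.1.1, h.2⟩, fun h ↦ ⟨⟨⟨h.1, hle ?_⟩, hle ?_⟩, h.2⟩⟩
  · linarith [h.2, sq_nonneg (p.2 : ℝ)]
  · linarith [h.2, sq_nonneg (p.1 : ℝ)]

lemma le_floor_sqrt_sub_sq_iff {a b : ℕ} (ha : (a : ℝ) ^ 2 ≤ x) :
    b ≤ ⌊√(x - a ^ 2)⌋₊ ↔ (a ^ 2 + b ^ 2 : ℝ) ≤ x := by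
  rw [Nat.le_floor_iff (sqrt_nonneg _), le_sqrt b.cast_nonneg (sub_nonneg.2 ha), le_sub_iff_add_le']

lemma natCast_sq_le_half (hx : 0 ≤ x) {n : ℕ} (hn : n ≤ ⌊√(x / 2)⌋₊) : (n : ℝ) ^ 2 ≤ x / 2 :=
  sq_le_half_of_le_sqrt_half hx n.cast_nonneg ((Nat.le_floor_iff (sqrt_nonneg _)).1 hn)

lemma card_quarterDisc_filter_fst (hx : 0 ≤ x) :
    ({p ∈ quarterDisc x | p.1 ≤ ⌊√(x / 2)⌋₊}).card =
      ∑ a ∈ Finset.Icc 1 ⌊√(x / 2)⌋₊, (⌊√(x - a ^ 2)⌋₊ + 1) := by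
  have hmaps : ∀ p ∈ Finset.filter (fun p ↦ p.1 ≤ ⌊√(x / 2)⌋₊) (quarterDisc x),
      p.1 ∈ Finset.Icc 1 ⌊√(x / 2)⌋₊ := fun p hp ↦
    have h := Finset.mem_filter.1 hp
    Finset.mem_Icc.2 ⟨(mem_quarterDisc.1 h.1).1, h.2⟩
  rw [Finset.card_eq_sum_card_fiberwise hmaps]
  refine Finset.sum_congr rfl fun a ha ↦ ?_
  obtain ⟨ha₁, ha₂⟩ := Finset.mem_Icc.1 ha
  have hfiber : Finset.filter (fun p ↦ p.1 = a) {p ∈ quarterDisc x | p.1 ≤ ⌊√(x / 2)⌋₊} =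
      {a} ×ˢ Finset.range (⌊√(x - a ^ 2)⌋₊ + 1) := by
    have ha_sq : (a : ℝ) ^ 2 ≤ x := by linarith [natCast_sq_le_half hx ha₂]
    ext p
    simp only [Finset.mem_filter, mem_quarterDisc, Finset.mem_product, Finset.mem_singleton,
      Finset.mem_range, Nat.lt_succ_iff, le_floor_sqrt_sub_sq_iff ha_sq]
    constructor
    · rintro ⟨⟨⟨-, h⟩, -⟩, rfl⟩
      exact ⟨rfl, h⟩
    · rintro ⟨rfl, h⟩
      exact ⟨⟨⟨ha₁, h⟩, ha₂⟩, rfl⟩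
  rw [hfiber, Finset.card_product, Finset.card_singleton, one_mul, Finset.card_range]

lemma card_quarterDisc_filter_snd (hx : 0 ≤ x) :
    ({p ∈ quarterDisc x | p.2 ≤ ⌊√(x / 2)⌋₊}).card =
      ∑ b ∈ Finset.range (⌊√(x / 2)⌋₊ + 1), ⌊√(x - b ^ 2)⌋₊ := by
  have hmaps : ∀ p ∈ Finset.filter (fun p ↦ p.2 ≤ ⌊√(x / 2)⌋₊) (quarterDisc x),
      p.2 ∈ Finset.range (⌊√(x / 2)⌋₊ + 1) := fun p hp ↦
    Finset.mem_range.2 (Nat.lt_succ_iff.2 (Finset.mem_filter.1 hp).2)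
  rw [Finset.card_eq_sum_card_fiberwise hmaps]
  refine Finset.sum_congr rfl fun b hb ↦ ?_
  have hb' : b ≤ ⌊√(x / 2)⌋₊ := Nat.lt_succ_iff.1 (Finset.mem_range.1 hb)
  have hfiber : Finset.filter (fun p ↦ p.2 = b) {p ∈ quarterDisc x | p.2 ≤ ⌊√(x / 2)⌋₊} =
      Finset.Icc 1 ⌊√(x - b ^ 2)⌋₊ ×ˢ {b} := by
    have hb_sq : (b : ℝ) ^ 2 ≤ x := by linarith [natCast_sq_le_half hx hb']
    ext p
    simp only [Finset.mem_filter, mem_quarterDisc, Finset.mem_product, Finset.mem_singleton,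
      Finset.mem_Icc, le_floor_sqrt_sub_sq_iff hb_sq, add_comm ((p.1 : ℝ) ^ 2)]
    constructor
    · rintro ⟨⟨h, -⟩, rfl⟩
      exact ⟨h, rfl⟩
    · rintro ⟨h, rfl⟩
      exact ⟨⟨h, hb'⟩, rfl⟩
  rw [hfiber, Finset.card_product, Finset.card_singleton, mul_one, Nat.card_Icc,
    Nat.add_sub_cancel]

-- Dirichlet's hyperbola method: some coordinate of a point of the disc is at most `√(x / 2)`, and
-- both are precisely on a square contained in the disc.
lemma card_quarterDisc_add (hx : 0 ≤ x) :
    (quarterDisc x).card + ⌊√(x / 2)⌋₊ ^ 2 + ⌊√x⌋₊ =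
      2 * ∑ n ∈ Finset.range ⌊√(x / 2)⌋₊, ⌊√(x - n ^ 2)⌋₊ +
        2 * ⌊√(x - ⌊√(x / 2)⌋₊ ^ 2)⌋₊ := by
  set M := ⌊√(x / 2)⌋₊ with hM
  have hunion : {p ∈ quarterDisc x | p.1 ≤ M} ∪ {p ∈ quarterDisc x | p.2 ≤ M} =
      quarterDisc x := by
    rw [← Finset.filter_or, Finset.filter_eq_self]
    intro p hp
    by_contra! h
    have h₁ := lt_sq_of_sqrt_lt ((Nat.floor_lt (sqrt_nonneg _)).1 h.1)
    have h₂ := lt_sq_of_sqrt_lt ((Nat.floor_lt (sqrt_nonneg _)).1 h.2)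
    linarith [(mem_quarterDisc.1 hp).2]
  have hinter : {p ∈ quarterDisc x | p.1 ≤ M} ∩ {p ∈ quarterDisc x | p.2 ≤ M} =
      Finset.Icc 1 M ×ˢ Finset.range (M + 1) := by
    ext p
    simp only [← Finset.filter_and, Finset.mem_filter, mem_quarterDisc, Finset.mem_product,
      Finset.mem_Icc, Finset.mem_range, Nat.lt_succ_iff]
    refine ⟨fun h ↦ ⟨⟨h.1.1, h.2.1⟩, h.2.2⟩, fun h ↦ ⟨⟨h.1.1, ?_⟩, h.1.2, h.2⟩⟩
    linarith [natCast_sq_le_half hx h.1.2, natCast_sq_le_half hx h.2]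
  have hcard := Finset.card_union_add_card_inter {p ∈ quarterDisc x | p.1 ≤ M}
    {p ∈ quarterDisc x | p.2 ≤ M}
  have hIcc : ∑ a ∈ Finset.Icc 1 M, ⌊√(x - a ^ 2)⌋₊ + ⌊√x⌋₊ =
      ∑ n ∈ Finset.range (M + 1), ⌊√(x - n ^ 2)⌋₊ := by
    rw [Finset.sum_range_eq_add_Ico _ M.succ_pos, ← Finset.Ico_add_one_right_eq_Icc, add_comm]
    simp
  rw [hunion, hinter, card_quarterDisc_filter_fst hx, card_quarterDisc_filter_snd hx, ← hM,
    Finset.sum_add_distrib, Finset.sum_const, Finset.card_product, Nat.card_Icc,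
    Finset.card_range, Nat.add_sub_cancel, smul_eq_mul] at hcard
  rw [Finset.sum_range_succ] at hcard hIcc
  linarith

end QuarterDisc

section CircleProblem

variable {x : ℝ}

lemma sqrt_sub_floor_sq_mem_Icc (hx : 0 ≤ x) :
    √(x - ⌊√(x / 2)⌋₊ ^ 2) ∈ Set.Icc √(x / 2) (√(x / 2) + 1) := by
  have hu := sqrt_nonneg (x / 2)
  have hfloor := Nat.floor_le hu
  refine ⟨sqrt_half_le_sqrt_sub_sq hx (Nat.cast_nonneg _) hfloor, ?_⟩
  rw [sqrt_le_left (by positivity)]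
  nlinarith [sq_sqrt (by positivity : 0 ≤ x / 2), Nat.lt_floor_add_one √(x / 2)]

lemma integral_floor_sqrt_sub_sq_mem_Icc (hx : 0 ≤ x) :
    ∫ t in (⌊√(x / 2)⌋₊ : ℝ)..√(x / 2), √(x - t ^ 2) ∈
      Set.Icc ((√(x / 2) - ⌊√(x / 2)⌋₊) * √(x / 2))
        ((√(x / 2) - ⌊√(x / 2)⌋₊) * √(x / 2) + 1) := by
  have hfloor := Nat.floor_le (sqrt_nonneg (x / 2))
  have hlt := Nat.lt_floor_add_one √(x / 2)
  have hint : IntervalIntegrable (fun t ↦ √(x - t ^ 2)) MeasureTheory.volume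
      ⌊√(x / 2)⌋₊ √(x / 2) := Continuous.intervalIntegrable (by fun_prop) _ _
  have hpos {t : ℝ} (ht : (⌊√(x / 2)⌋₊ : ℝ) ≤ t) : 0 ≤ t := (Nat.cast_nonneg _).trans ht
  constructor
  · have := intervalIntegral.integral_mono_on hfloor intervalIntegrable_const hint
      fun t ht ↦ sqrt_half_le_sqrt_sub_sq hx (hpos ht.1) ht.2
    rwa [intervalIntegral.integral_const, smul_eq_mul] at this
  · have := intervalIntegral.integral_mono_on hfloor hint intervalIntegrable_const
      fun t ht ↦ (sqrt_le_sqrt (by gcongr; exact ht.1)).trans (sqrt_sub_floor_sq_mem_Icc hx).2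
    rw [intervalIntegral.integral_const, smul_eq_mul] at this
    linarith

lemma Icc_neg_one_floor_subset (hx : 1 ≤ x) :
    Set.Icc (-1) (⌊√(x / 2)⌋₊ : ℝ) ⊆ {t : ℝ | t ^ 2 ≤ x} := by
  intro t ⟨ht₁, ht₂⟩
  have := natCast_sq_le_half (by linarith) (le_refl ⌊√(x / 2)⌋₊)
  change t ^ 2 ≤ x
  rcases le_total t 0 with ht | ht <;> nlinarith

lemma integral_sub_trapezoidal_sqrt_sub_sq_mem_Icc (hx : 1 ≤ x) :
    (∫ t in (0 : ℝ)..⌊√(x / 2)⌋₊, √(x - t ^ 2)) -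
      (∑ n ∈ Finset.range ⌊√(x / 2)⌋₊, √(x - n ^ 2) + (√(x - ⌊√(x / 2)⌋₊ ^ 2) - √x) / 2) ∈
        Set.Icc 0 1 := by
  have hcont : Continuous fun t ↦ √(x - t ^ 2) := by fun_prop
  have hfloor := Nat.floor_le (sqrt_nonneg (x / 2))
  have hslope₀ : √x - √(x - 1) ≤ 1 := by
    rw [sub_le_iff_le_add, sqrt_le_left (by positivity)]
    nlinarith [sq_sqrt (sub_nonneg.2 hx), sqrt_nonneg (x - 1)]
  have hslope : √(x - (⌊√(x / 2)⌋₊ - 1) ^ 2) - √(x - ⌊√(x / 2)⌋₊ ^ 2) ≤ 1 := by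
    rcases Nat.eq_zero_or_pos ⌊√(x / 2)⌋₊ with h | h
    · rw [h, Nat.cast_zero]
      refine (sub_nonpos.2 (sqrt_le_sqrt ?_)).trans zero_le_one
      norm_num
    · have h₁ : (1 : ℝ) ≤ ⌊√(x / 2)⌋₊ := mod_cast h
      have := (sqrt_sub_sq_sub_mem_Icc (zero_lt_one.trans_le hx) (sub_nonneg.2 h₁) (by linarith)).2
      rwa [sub_add_cancel] at this
  have htrap := integral_sub_trapezoidal_mem_Icc_of_concaveOn
    (concaveOn_sqrt_sub_sq.subset (Icc_neg_one_floor_subset hx) (convex_Icc _ _))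
    fun n _ ↦ hcont.intervalIntegrable _ _
  simp only [zero_pow two_ne_zero, neg_one_sq, sub_zero] at htrap
  exact ⟨htrap.1, htrap.2.trans (by linarith)⟩

lemma abs_sum_sqrt_sub_sq_sub_le (hx : 1 ≤ x) :
    |∑ n ∈ Finset.range ⌊√(x / 2)⌋₊, √(x - n ^ 2) -
      ((π / 8 + 1 / 4) * x - (√(x / 2) - ⌊√(x / 2)⌋₊) * √(x / 2) + √x / 2 - √(x / 2) / 2)| ≤
        3 := by
  have hx₀ : 0 ≤ x := by linarith
  have hcont : Continuous fun t ↦ √(x - t ^ 2) := by fun_prop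
  obtain ⟨hend₁, hend₂⟩ := sqrt_sub_floor_sq_mem_Icc hx₀
  obtain ⟨hint₁, hint₂⟩ := integral_floor_sqrt_sub_sq_mem_Icc hx₀
  obtain ⟨htrap₁, htrap₂⟩ := integral_sub_trapezoidal_sqrt_sub_sq_mem_Icc hx
  have hsplit := intervalIntegral.integral_add_adjacent_intervals
    (hcont.intervalIntegrable (μ := MeasureTheory.volume) 0 ⌊√(x / 2)⌋₊)
    (hcont.intervalIntegrable ⌊√(x / 2)⌋₊ √(x / 2))
  rw [integral_sqrt_sub_sq hx₀] at hsplit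
  rw [abs_le]
  constructor <;> linarith

lemma sum_natFloor_eq_sub {ι : Type*} {s : Finset ι} {t : ι → ℝ} (ht : ∀ n ∈ s, 0 ≤ t n) :
    ∑ n ∈ s, (⌊t n⌋₊ : ℝ) =
      ∑ n ∈ s, t n - ∑ n ∈ s, (Int.fract (t n) - 1 / 2) - s.card / 2 := by
  have hfloor : ∑ n ∈ s, (⌊t n⌋₊ : ℝ) = ∑ n ∈ s, (t n - Int.fract (t n)) :=
    Finset.sum_congr rfl fun n hn ↦ by
      rw [natCast_floor_eq_intCast_floor (ht n hn), Int.self_sub_fract]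
  rw [hfloor, Finset.sum_sub_distrib, Finset.sum_sub_distrib, Finset.sum_const, nsmul_eq_mul]
  ring

lemma quarterDisc_eq_empty (hx : x < 1) : quarterDisc x = ∅ := by
  refine Finset.eq_empty_of_forall_notMem fun p hp ↦ ?_
  obtain ⟨h₁, h₂⟩ := mem_quarterDisc.1 hp
  have : (1 : ℝ) ≤ p.1 := mod_cast h₁
  nlinarith [sq_nonneg (p.2 : ℝ)]

theorem abs_card_quarterDisc_sub_le (hx : 0 ≤ x) :
    |((quarterDisc x).card : ℝ) - π / 4 * x| ≤ 80 * x ^ (1 / 3 : ℝ) := by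
  rcases lt_or_ge x 1 with hx₁ | hx₁
  · rw [quarterDisc_eq_empty hx₁, Finset.card_empty, Nat.cast_zero, zero_sub, abs_neg,
      abs_of_nonneg (by positivity)]
    nlinarith [self_le_rpow_of_le_one hx hx₁.le (by norm_num : (1 / 3 : ℝ) ≤ 1), pi_le_four]
  · have hroot : 1 ≤ x ^ (1 / 3 : ℝ) := one_le_rpow hx₁ (by norm_num)
    have hfloor_sum := sum_natFloor_eq_sub (s := Finset.range ⌊√(x / 2)⌋₊)
      (t := fun n ↦ √(x - n ^ 2)) fun n _ ↦ sqrt_nonneg _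
    rw [Finset.card_range] at hfloor_sum
    have hsawtooth := abs_le.1 (abs_sum_fract_sqrt_sub_sq_le hx₁)
    have hsum := abs_le.1 (abs_sum_sqrt_sub_sq_sub_le hx₁)
    have hcard : ((quarterDisc x).card + ⌊√(x / 2)⌋₊ ^ 2 + ⌊√x⌋₊ : ℝ) =
        2 * ∑ n ∈ Finset.range ⌊√(x / 2)⌋₊, (⌊√(x - n ^ 2)⌋₊ : ℝ) +
          2 * ⌊√(x - ⌊√(x / 2)⌋₊ ^ 2)⌋₊ := mod_cast card_quarterDisc_add hx
    obtain ⟨hend₁, hend₂⟩ := sqrt_sub_floor_sq_mem_Icc hx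
    have hfloor {t : ℝ} (ht : 0 ≤ t) : (⌊t⌋₊ : ℝ) ≤ t ∧ t < ⌊t⌋₊ + 1 :=
      ⟨Nat.floor_le ht, Nat.lt_floor_add_one t⟩
    obtain ⟨hu₁, hu₂⟩ := hfloor (sqrt_nonneg (x / 2))
    obtain ⟨hr₁, hr₂⟩ := hfloor (sqrt_nonneg x)
    obtain ⟨he₁, he₂⟩ := hfloor (sqrt_nonneg (x - ⌊√(x / 2)⌋₊ ^ 2))
    have hsq : √(x / 2) ^ 2 = x / 2 := sq_sqrt (by positivity)
    have hfract : 0 ≤ (√(x / 2) - ⌊√(x / 2)⌋₊) ^ 2 ∧ (√(x / 2) - ⌊√(x / 2)⌋₊) ^ 2 ≤ 1 :=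
      ⟨sq_nonneg _, pow_le_one₀ (by linarith) (by linarith)⟩
    rw [abs_le]
    constructor <;> linarith

end CircleProblem

section MoebiusSum

open UniqueFactorizationMonoid

variable {α : Type*} [CommMonoidWithZero α] [UniqueFactorizationMonoid α]

lemma abs_moebius_le_one (a : α) : |moebius a| ≤ 1 := by
  by_cases ha : Squarefree a
  · rw [ha.moebius_eq, abs_neg_one_pow]
  · rw [moebius_of_not_squarefree ha, abs_zero]
    exact zero_le_one

lemma abs_moebius_mul_le (a : α) (r : ℝ) : |(moebius a : ℝ) * r| ≤ |r| := by
  rw [abs_mul]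
  exact mul_le_of_le_one_left (abs_nonneg r) (mod_cast abs_moebius_le_one a)

lemma moebius_irreducible_mul {p d : α} (hp : Irreducible p) (hpd : ¬p ∣ d) :
    moebius (p * d) = -moebius d := by
  rw [((hp.isRelPrime_iff_not_dvd).2 hpd).moebius_mul, hp.moebius_eq, neg_one_mul]

lemma moebius_mul_eq_zero_of_dvd {p d : α} (hp : Irreducible p) (hpd : p ∣ d) :
    moebius (p * d) = 0 :=
  moebius_of_not_squarefree fun hsq ↦ hp.not_isUnit (hsq p (mul_dvd_mul_left p hpd))

lemma sum_moebius_eq_ite [Subsingleton αˣ] [DecidableEq α] {a : α} (ha : a ≠ 0) {s : Finset α}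
    (hs : ∀ d, d ∈ s ↔ d ∣ a) : ∑ d ∈ s, moebius d = if a = 1 then 1 else 0 := by
  classical
  split_ifs with ha₁
  · have : s = {1} := by
      ext d
      rw [hs, ha₁, ← isUnit_iff_dvd_one, isUnit_iff_eq_one, Finset.mem_singleton]
    rw [this, Finset.sum_singleton, moebius_one]
  · obtain ⟨p, hp, q, rfl⟩ := WfDvdMonoid.exists_irreducible_factor
      (mt isUnit_iff_eq_one.1 ha₁) ha
    have hmul {d : α} : p * d ∈ s ↔ d ∣ q := by
      rw [hs, mul_dvd_mul_iff_left hp.ne_zero]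
    have hcancel : ∑ d ∈ s with ¬p ∣ d, -moebius d = ∑ d ∈ s with p ∣ d, moebius d := by
      refine Finset.sum_of_injOn (p * ·) (mul_right_injective₀ hp.ne_zero).injOn ?_ ?_ ?_
      · intro d hd
        obtain ⟨hds, hpd⟩ := Finset.mem_filter.1 hd
        have hdq := ((hp.isRelPrime_iff_not_dvd).2 hpd).symm.dvd_of_dvd_mul_left ((hs d).1 hds)
        exact Finset.mem_filter.2 ⟨hmul.2 hdq, dvd_mul_right p d⟩
      · intro d hd hd'
        obtain ⟨hds, e, rfl⟩ := Finset.mem_filter.1 hd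
        refine moebius_mul_eq_zero_of_dvd hp (by_contra fun hpe ↦ hd' ⟨e, ?_, rfl⟩)
        exact Finset.mem_filter.2 ⟨(hs e).2 (dvd_mul_of_dvd_right (hmul.1 hds) p), hpe⟩
      · intro d hd
        exact (moebius_irreducible_mul hp (Finset.mem_filter.1 hd).2).symm
    rw [← Finset.sum_filter_add_sum_filter_not s (p ∣ ·), ← hcancel, Finset.sum_neg_distrib,
      neg_add_cancel]

end MoebiusSum

section SummableOfLinearCount

lemma sum_natCast_rpow_neg_le_of_log_eq {ι : Type*} {N : ι → ℕ} {C s : ℝ} {k : ℕ}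
    (hN : ∀ i, N i ≠ 0) (hs : 0 ≤ s) {u : Finset ι} (hu : ∀ i ∈ u, Nat.log 2 (N i) = k)
    (hcard : (u.card : ℝ) ≤ C * 2 ^ (k + 1)) :
    ∑ i ∈ u, (N i : ℝ) ^ (-s) ≤ 2 * C * ((2 : ℝ) ^ (1 - s)) ^ k := by
  have hterm : ∀ i ∈ u, (N i : ℝ) ^ (-s) ≤ ((2 : ℝ) ^ k) ^ (-s) := fun i hi ↦ by
    refine rpow_le_rpow_of_nonpos (by positivity) ?_ (neg_nonpos.2 hs)
    exact_mod_cast hu i hi ▸ Nat.pow_log_le_self 2 (hN i)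
  calc ∑ i ∈ u, (N i : ℝ) ^ (-s) ≤ u.card * ((2 : ℝ) ^ k) ^ (-s) := by
        simpa only [nsmul_eq_mul] using Finset.sum_le_card_nsmul u _ _ hterm
    _ ≤ C * 2 ^ (k + 1) * ((2 : ℝ) ^ k) ^ (-s) := by gcongr
    _ = 2 * C * ((2 : ℝ) ^ (1 - s)) ^ k := by
        rw [← rpow_natCast_mul zero_le_two, ← rpow_mul_natCast zero_le_two, pow_succ',
          ← rpow_natCast, show (1 - s) * k = k + k * -s by ring, rpow_add zero_lt_two]
        ring

lemma summable_natCast_rpow_neg_of_card_le {ι : Type*} {N : ι → ℕ} {C s : ℝ} (hN : ∀ i, N i ≠ 0)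
    (hcard : ∀ (t : ℕ) (u : Finset ι), (∀ i ∈ u, N i ≤ t) → (u.card : ℝ) ≤ C * t) (hs : 1 < s) :
    Summable fun i ↦ (N i : ℝ) ^ (-s) := by
  have hC : 0 ≤ C := by simpa using hcard 1 ∅
  have hgeom : Summable fun k : ℕ ↦ 2 * C * ((2 : ℝ) ^ (1 - s)) ^ k :=
    (summable_geometric_of_lt_one (by positivity)
      (rpow_lt_one_of_one_lt_of_neg one_lt_two (by linarith))).mul_left _
  refine summable_of_sum_le (fun _ ↦ by positivity) (c := ∑' k : ℕ, 2 * C * (2 ^ (1 - s)) ^ k)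
    fun u ↦ ?_
  rw [← Finset.sum_fiberwise_of_maps_to
    fun i hi ↦ Finset.mem_image_of_mem (fun i ↦ Nat.log 2 (N i)) hi]
  refine (Finset.sum_le_sum fun k _ ↦ ?_).trans
    (hgeom.sum_le_tsum _ fun k _ ↦ by positivity)
  have hlog : ∀ i ∈ u.filter (fun i ↦ Nat.log 2 (N i) = k), Nat.log 2 (N i) = k :=
    fun i hi ↦ (Finset.mem_filter.1 hi).2
  refine sum_natCast_rpow_neg_le_of_log_eq hN (by linarith) hlog ?_
  exact_mod_cast hcard (2 ^ (k + 1)) _ fun i hi ↦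
    (hlog i hi ▸ Nat.lt_pow_succ_log_self one_lt_two (N i)).le

end SummableOfLinearCount

section IdealCount

open Ideal UniqueFactorizationMonoid

variable {R : Type*} [CommRing R] [IsDedekindDomain R] [Module.Free ℤ R]

variable (R) in
/-- The Dedekind zeta function `∑ N(I)⁻ˢ` of `R` at a real number `s`. The zero ideal contributes
`0 ^ (-s)`, which is `0` for `s ≠ 0`. -/
noncomputable def idealZeta (s : ℝ) : ℝ := ∑' I : Ideal R, (absNorm I : ℝ) ^ (-s)

lemma one_le_idealZeta {s : ℝ} (hs : Summable fun I : Ideal R ↦ (absNorm I : ℝ) ^ (-s)) :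
    1 ≤ idealZeta R s := by
  have := hs.le_tsum ⊤ fun I _ ↦ by positivity
  rwa [absNorm_top, Nat.cast_one, one_rpow] at this

variable [Module.Finite ℤ R]

lemma absNorm_le_absNorm_of_dvd {D I : Ideal R} (hI : I ≠ ⊥) (hD : D ∣ I) :
    absNorm D ≤ absNorm I :=
  Nat.le_of_dvd (Nat.pos_of_ne_zero (mt absNorm_eq_zero_iff.1 hI)) (map_dvd absNorm hD)

lemma absNorm_cast_pos {I : Ideal R} (hI : I ≠ ⊥) : (0 : ℝ) < absNorm I :=
  Nat.cast_pos.2 (Nat.pos_of_ne_zero (mt absNorm_eq_zero_iff.1 hI))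

lemma one_le_absNorm_cast {I : Ideal R} (hI : I ≠ ⊥) : (1 : ℝ) ≤ absNorm I :=
  Nat.one_le_cast.2 (Nat.pos_of_ne_zero (mt absNorm_eq_zero_iff.1 hI))

variable [CharZero R]

lemma finite_setOf_ne_bot_absNorm_cast_le (x : ℝ) :
    {I : Ideal R | I ≠ ⊥ ∧ (absNorm I : ℝ) ≤ x}.Finite :=
  (finite_setOfPred_absNorm_le ⌊x⌋₊).subset fun _ hI ↦ Nat.le_floor hI.2

variable (R) in
/-- The nonzero ideals of `R` of absolute norm at most `x`. -/
noncomputable def idealsOfNormLE (x : ℝ) : Finset (Ideal R) :=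
  (finite_setOf_ne_bot_absNorm_cast_le x).toFinset

variable {x : ℝ}

lemma mem_idealsOfNormLE {I : Ideal R} :
    I ∈ idealsOfNormLE R x ↔ I ≠ ⊥ ∧ (absNorm I : ℝ) ≤ x := by
  rw [idealsOfNormLE, Set.Finite.mem_toFinset, Set.mem_ofPred_eq]

lemma idealsOfNormLE_eq_empty (hx : x < 1) : idealsOfNormLE R x = ∅ :=
  Finset.eq_empty_of_forall_notMem fun _ hI ↦
    ((one_le_absNorm_cast (mem_idealsOfNormLE.1 hI).1).trans (mem_idealsOfNormLE.1 hI).2).not_gt hx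

lemma idealsOfNormLE_nonempty (hx : 1 ≤ x) : (idealsOfNormLE R x).Nonempty :=
  ⟨⊤, mem_idealsOfNormLE.2 ⟨top_ne_bot, by rwa [absNorm_top, Nat.cast_one]⟩⟩

lemma mul_mem_idealsOfNormLE {D I : Ideal R} (hD : D ≠ ⊥) :
    D * I ∈ idealsOfNormLE R x ↔ I ∈ idealsOfNormLE R (x / absNorm D) := by
  rw [mem_idealsOfNormLE, mem_idealsOfNormLE, map_mul, Nat.cast_mul,
    le_div_iff₀' (absNorm_cast_pos hD), Ne, mul_eq_bot, or_iff_right hD]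

open scoped Classical in
lemma card_filter_dvd_idealsOfNormLE {D : Ideal R} (hD : D ≠ ⊥) :
    {I ∈ idealsOfNormLE R x | D ∣ I}.card = (idealsOfNormLE R (x / absNorm D)).card := by
  rw [← Finset.card_image_of_injective (idealsOfNormLE R (x / absNorm D))
    (mul_right_injective₀ hD)]
  congr 1
  ext I
  rw [Finset.mem_filter, Finset.mem_image]
  constructor
  · rintro ⟨hI, J, rfl⟩
    exact ⟨J, (mul_mem_idealsOfNormLE hD).1 hI, rfl⟩
  · rintro ⟨J, hJ, rfl⟩
    exact ⟨(mul_mem_idealsOfNormLE hD).2 hJ, dvd_mul_right D J⟩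

open scoped Classical in
variable (R) in
/-- The pairs of nonzero ideals of `R` of absolute norm at most `x` whose greatest common divisor
is `K`. -/
noncomputable def pairsWithGcd (x : ℝ) (K : Ideal R) : Finset (Ideal R × Ideal R) :=
  {p ∈ idealsOfNormLE R x ×ˢ idealsOfNormLE R x | p.1 ⊔ p.2 = K}

lemma mem_pairsWithGcd {K : Ideal R} {p : Ideal R × Ideal R} :
    p ∈ pairsWithGcd R x K ↔
      (p.1 ∈ idealsOfNormLE R x ∧ p.2 ∈ idealsOfNormLE R x) ∧ p.1 ⊔ p.2 = K := by
  rw [pairsWithGcd, Finset.mem_filter, Finset.mem_product]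

lemma card_pairsWithGcd {K : Ideal R} (hK : K ≠ ⊥) :
    (pairsWithGcd R x K).card = (pairsWithGcd R (x / absNorm K) 1).card := by
  classical
  have hinj : Function.Injective (Prod.map (K * ·) (K * ·)) :=
    (mul_right_injective₀ hK).prodMap (mul_right_injective₀ hK)
  rw [← Finset.card_image_of_injective (pairsWithGcd R (x / absNorm K) 1) hinj]
  congr 1
  have hmul (I J : Ideal R) : (K * I, K * J) ∈ pairsWithGcd R x K ↔
      (I, J) ∈ pairsWithGcd R (x / absNorm K) 1 := by
    simp only [mem_pairsWithGcd, mul_mem_idealsOfNormLE hK, ← Ideal.mul_sup]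
    rw [mul_eq_left₀ hK]
  ext ⟨I, J⟩
  rw [Finset.mem_image]
  constructor
  · intro h
    obtain ⟨I, rfl⟩ : K ∣ I := dvd_iff_le.2 ((mem_pairsWithGcd.1 h).2 ▸ le_sup_left)
    obtain ⟨J, rfl⟩ : K ∣ J := dvd_iff_le.2 ((mem_pairsWithGcd.1 h).2 ▸ le_sup_right)
    exact ⟨(I, J), (hmul I J).1 h, rfl⟩
  · rintro ⟨p, hp, h⟩
    rw [← h]
    exact (hmul p.1 p.2).2 hp

lemma card_pairsWithGcd_one_eq_sum :
    ((pairsWithGcd R x 1).card : ℤ) =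
      ∑ D ∈ idealsOfNormLE R x, moebius D * ((idealsOfNormLE R (x / absNorm D)).card : ℤ) ^ 2 := by
  classical
  have hpair : ∀ p ∈ idealsOfNormLE R x ×ˢ idealsOfNormLE R x,
      (if p.1 ⊔ p.2 = 1 then (1 : ℤ) else 0) =
        ∑ D ∈ idealsOfNormLE R x with D ∣ p.1 ∧ D ∣ p.2, moebius D := by
    intro p hp
    have hp₁ := mem_idealsOfNormLE.1 (Finset.mem_product.1 hp).1
    refine (sum_moebius_eq_ite (fun h ↦ hp₁.1 (sup_eq_bot_iff.1 h).1) fun D ↦ ?_).symm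
    rw [Finset.mem_filter, dvd_iff_le, dvd_iff_le, dvd_iff_le, sup_le_iff, and_iff_right_iff_imp]
    intro hD
    refine mem_idealsOfNormLE.2 ⟨fun h ↦ hp₁.1 (le_bot_iff.1 (h ▸ hD.1)), le_trans ?_ hp₁.2⟩
    exact mod_cast absNorm_le_absNorm_of_dvd hp₁.1 (dvd_iff_le.2 hD.1)
  rw [pairsWithGcd, Finset.card_filter, Nat.cast_sum]
  simp only [Nat.cast_ite, Nat.cast_one, Nat.cast_zero, Finset.sum_congr rfl hpair,
    Finset.sum_filter]
  rw [Finset.sum_comm]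
  refine Finset.sum_congr rfl fun D hD ↦ ?_
  rw [← Finset.sum_filter, Finset.sum_const, Finset.filter_product, Finset.card_product,
    card_filter_dvd_idealsOfNormLE (mem_idealsOfNormLE.1 hD).1, nsmul_eq_mul, Nat.cast_mul]
  ring

lemma card_pairsWithGcd_one_eq_tsum :
    ((pairsWithGcd R x 1).card : ℝ) =
      ∑' D : Ideal R, (moebius D : ℝ) * ((idealsOfNormLE R (x / absNorm D)).card : ℝ) ^ 2 := by
  rw [tsum_eq_sum (s := idealsOfNormLE R x)]
  · exact_mod_cast congrArg (Int.cast : ℤ → ℝ) (card_pairsWithGcd_one_eq_sum (R := R) (x := x))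
  · intro D hD
    rcases eq_or_ne D ⊥ with rfl | hD₀
    · rw [← zero_eq_bot, moebius_zero, Int.cast_zero, zero_mul]
    · have hlt : x < absNorm D := lt_of_not_ge fun h ↦ hD (mem_idealsOfNormLE.2 ⟨hD₀, h⟩)
      rw [idealsOfNormLE_eq_empty ((div_lt_one (absNorm_cast_pos hD₀)).2 hlt), Finset.card_empty,
        Nat.cast_zero, zero_pow two_ne_zero, mul_zero]

lemma summable_absNorm_rpow_neg {E s : ℝ}
    (hcard : ∀ t : ℝ, 0 ≤ t → ((idealsOfNormLE R t).card : ℝ) ≤ E * t) (hs : 1 < s) :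
    Summable fun I : Ideal R ↦ (absNorm I : ℝ) ^ (-s) := by
  have hsupp (I : Ideal R) (hI : I ∉ Set.range (Subtype.val : {I : Ideal R // I ≠ ⊥} → Ideal R)) :
      (absNorm I : ℝ) ^ (-s) = 0 := by
    have hI : I = ⊥ := by_contra fun h ↦ hI ⟨⟨I, h⟩, rfl⟩
    rw [hI, absNorm_bot, Nat.cast_zero, zero_rpow (by linarith)]
  refine (Subtype.val_injective.summable_iff hsupp).1 ?_
  refine summable_natCast_rpow_neg_of_card_le (C := E)
    (N := fun I : {I : Ideal R // I ≠ ⊥} ↦ absNorm I.1)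
    (fun I ↦ mt absNorm_eq_zero_iff.1 I.2) (fun t u hu ↦ ?_) hs
  refine le_trans ?_ (hcard t t.cast_nonneg)
  rw [← Finset.card_map (Function.Embedding.subtype _)]
  refine Nat.cast_le.2 (Finset.card_le_card fun I hI ↦ ?_)
  obtain ⟨J, hJ, rfl⟩ := Finset.mem_map.1 hI
  exact mem_idealsOfNormLE.2 ⟨J.2, Nat.cast_le.2 (hu J hJ)⟩

lemma tsum_moebius_fst_fiber {J : Ideal R} (hJ : J ≠ ⊥) :
    ∑' p : (fun p : Ideal R × Ideal R ↦ p.1 * p.2) ⁻¹' {J}, (moebius p.1.1 : ℝ) =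
      if J = 1 then 1 else 0 := by
  classical
  have hdiv (D : Ideal R) : D ∈ {D ∈ idealsOfNormLE R (absNorm J) | D ∣ J} ↔ D ∣ J := by
    rw [Finset.mem_filter, mem_idealsOfNormLE, and_iff_right_iff_imp]
    exact fun hD ↦ ⟨ne_zero_of_dvd_ne_zero hJ hD, mod_cast absNorm_le_absNorm_of_dvd hJ hD⟩
  have hinj : Function.Injective
      fun p : (fun p : Ideal R × Ideal R ↦ p.1 * p.2) ⁻¹' {J} ↦ p.1.1 := by
    intro p q hpq
    have hp : p.1.1 * p.1.2 = J := p.2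
    have hq : p.1.1 * q.1.2 = J := (congrArg (· * q.1.2) hpq).trans q.2
    exact Subtype.ext (Prod.ext hpq
      (mul_left_cancel₀ (left_ne_zero_of_mul (hp.trans_ne hJ)) (hp.trans hq.symm)))
  have hrange : Set.range (fun p : (fun p : Ideal R × Ideal R ↦ p.1 * p.2) ⁻¹' {J} ↦ p.1.1) =
      ({D ∈ idealsOfNormLE R (absNorm J) | D ∣ J} : Finset (Ideal R)) := by
    ext D
    rw [Finset.mem_coe, hdiv]
    exact ⟨fun ⟨p, hp⟩ ↦ ⟨p.1.2, hp ▸ p.2.symm⟩, fun ⟨I, hI⟩ ↦ ⟨⟨(D, I), hI.symm⟩, rfl⟩⟩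
  rw [← tsum_range (fun D ↦ (moebius D : ℝ)) hinj, hrange,
    Finset.tsum_subtype' _ fun D ↦ (moebius D : ℝ)]
  exact_mod_cast congrArg (Int.cast : ℤ → ℝ) (sum_moebius_eq_ite hJ hdiv)

lemma tsum_moebius_mul_idealZeta {s : ℝ} (hs₀ : s ≠ 0)
    (hs : Summable fun I : Ideal R ↦ (absNorm I : ℝ) ^ (-s)) :
    (∑' D : Ideal R, (moebius D : ℝ) * (absNorm D : ℝ) ^ (-s)) * idealZeta R s = 1 := by
  classical
  have hmoebius : Summable fun D : Ideal R ↦ ‖(moebius D : ℝ) * (absNorm D : ℝ) ^ (-s)‖ :=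
    hs.norm.of_nonneg_of_le (fun _ ↦ norm_nonneg _) fun D ↦ abs_moebius_mul_le D _
  have hfiber (J : Ideal R) :
      ∑' p : (fun p : Ideal R × Ideal R ↦ p.1 * p.2) ⁻¹' {J},
        (moebius p.1.1 : ℝ) * (absNorm p.1.1 : ℝ) ^ (-s) * (absNorm p.1.2 : ℝ) ^ (-s) =
          if J = 1 then 1 else 0 := by
    have hterm (p : (fun p : Ideal R × Ideal R ↦ p.1 * p.2) ⁻¹' {J}) :
        (moebius p.1.1 : ℝ) * (absNorm p.1.1 : ℝ) ^ (-s) * (absNorm p.1.2 : ℝ) ^ (-s) =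
          moebius p.1.1 * (absNorm J : ℝ) ^ (-s) := by
      rw [mul_assoc, ← mul_rpow (Nat.cast_nonneg _) (Nat.cast_nonneg _), ← Nat.cast_mul,
        ← map_mul, show p.1.1 * p.1.2 = J from p.2]
    rw [tsum_congr hterm, tsum_mul_right]
    rcases eq_or_ne J ⊥ with rfl | hJ
    · rw [absNorm_bot, Nat.cast_zero, zero_rpow (neg_ne_zero.2 hs₀), mul_zero, if_neg]
      exact zero_ne_one
    · rw [tsum_moebius_fst_fiber hJ]
      split_ifs with hJ₁
      · rw [hJ₁, map_one, Nat.cast_one, one_rpow, mul_one]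
      · rw [zero_mul]
  rw [idealZeta, tsum_mul_tsum_of_summable_norm hmoebius hs.norm,
    ← ((summable_mul_of_summable_norm hmoebius hs.norm).hasSum.tsum_fiberwise
      fun p ↦ p.1 * p.2).tsum_eq, tsum_congr hfiber, tsum_ite_eq]

lemma hasSum_moebius_mul_absNorm_rpow_neg {s : ℝ} (hs₀ : s ≠ 0)
    (hs : Summable fun I : Ideal R ↦ (absNorm I : ℝ) ^ (-s)) :
    HasSum (fun D : Ideal R ↦ (moebius D : ℝ) * (absNorm D : ℝ) ^ (-s)) (idealZeta R s)⁻¹ := by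
  rw [← eq_inv_of_mul_eq_one_left (tsum_moebius_mul_idealZeta hs₀ hs)]
  exact (hs.norm.of_norm_bounded fun D ↦ abs_moebius_mul_le D _).hasSum

end IdealCount

section GcdDensity

open Ideal UniqueFactorizationMonoid

variable {R : Type*} [CommRing R] [IsDedekindDomain R] [Module.Free ℤ R] [Module.Finite ℤ R]
  [CharZero R] {c C θ : ℝ}

lemma card_idealsOfNormLE_le (hC : 0 ≤ C) (hθ : θ ≤ 1)
    (hcount : ∀ t : ℝ, 0 ≤ t → |((idealsOfNormLE R t).card : ℝ) - c * t| ≤ C * t ^ θ)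
    (hc : 0 ≤ c) {t : ℝ} (ht : 0 ≤ t) : ((idealsOfNormLE R t).card : ℝ) ≤ (c + C) * t := by
  rcases lt_or_ge t 1 with ht₁ | ht₁
  · rw [idealsOfNormLE_eq_empty ht₁, Finset.card_empty, Nat.cast_zero]
    positivity
  · have hpow : C * t ^ θ ≤ C * t := by
      gcongr
      exact rpow_le_self_of_one_le ht₁ hθ
    linarith [(abs_le.1 (hcount t ht)).2]

lemma abs_card_idealsOfNormLE_sq_sub_le (hC : 0 ≤ C) (hθ₀ : 0 < θ) (hθ : θ ≤ 1)
    (hcount : ∀ t : ℝ, 0 ≤ t → |((idealsOfNormLE R t).card : ℝ) - c * t| ≤ C * t ^ θ)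
    (hc : 0 ≤ c) {t : ℝ} (ht : 0 ≤ t) :
    |((idealsOfNormLE R t).card : ℝ) ^ 2 - c ^ 2 * t ^ 2| ≤ C * (2 * c + C) * t ^ (1 + θ) := by
  have hsum : |((idealsOfNormLE R t).card : ℝ) + c * t| ≤ (2 * c + C) * t := by
    rw [abs_of_nonneg (by positivity)]
    linarith [card_idealsOfNormLE_le hC hθ hcount hc ht]
  rw [← mul_pow, sq_sub_sq, abs_mul, rpow_one_add' ht (by positivity)]
  calc _ ≤ (2 * c + C) * t * (C * t ^ θ) := by gcongr; exact hcount t ht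
    _ = _ := by ring

lemma exists_mul_le_card_idealsOfNormLE (hc : 0 < c) (hθ : θ < 1)
    (hcount : ∀ t : ℝ, 0 ≤ t → |((idealsOfNormLE R t).card : ℝ) - c * t| ≤ C * t ^ θ) :
    ∃ d : ℝ, 0 < d ∧ ∀ x : ℝ, 1 ≤ x → d * x ≤ (idealsOfNormLE R x).card := by
  have hlim : Tendsto (fun x : ℝ ↦ C * x ^ (-(1 - θ))) atTop (𝓝 0) := by
    simpa only [mul_zero] using (tendsto_rpow_neg_atTop (sub_pos.2 hθ)).const_mul C
  obtain ⟨X, hX⟩ := eventually_atTop.1 (hlim.eventually_le_const (half_pos hc))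
  refine ⟨min (c / 2) (1 / max X 1), by positivity, fun x hx ↦ ?_⟩
  have hx₀ : 0 < x := by linarith
  rcases le_total X x with hXx | hXx
  · have hpow : C * x ^ θ ≤ c / 2 * x := by
      have := mul_le_mul_of_nonneg_right (hX x hXx) hx₀.le
      rwa [mul_assoc, ← rpow_add_one hx₀.ne', neg_sub, sub_add_cancel] at this
    calc min (c / 2) (1 / max X 1) * x ≤ c / 2 * x := by gcongr; exact min_le_left _ _
      _ ≤ _ := by linarith [(abs_le.1 (hcount x hx₀.le)).1]
  · calc min (c / 2) (1 / max X 1) * x ≤ 1 / max X 1 * max X 1 := by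
          gcongr
          · exact min_le_right _ _
          · exact hXx.trans (le_max_left _ _)
      _ = 1 := one_div_mul_cancel (by positivity)
      _ ≤ _ := Nat.one_le_cast.2 (idealsOfNormLE_nonempty hx).card_pos

lemma abs_card_pairsWithGcd_one_sub_le (hC : 0 ≤ C) (hθ₀ : 0 < θ) (hθ : θ ≤ 1)
    (hcount : ∀ t : ℝ, 0 ≤ t → |((idealsOfNormLE R t).card : ℝ) - c * t| ≤ C * t ^ θ)
    (hc : 0 ≤ c) {y : ℝ} (hy : 0 ≤ y) :
    |((pairsWithGcd R y 1).card : ℝ) - c ^ 2 * y ^ 2 / idealZeta R 2| ≤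
      C * (2 * c + C) * idealZeta R (1 + θ) * y ^ (1 + θ) := by
  have hsummable {s : ℝ} (hs : 1 < s) : Summable fun I : Ideal R ↦ (absNorm I : ℝ) ^ (-s) :=
    summable_absNorm_rpow_neg (fun t ht ↦ card_idealsOfNormLE_le hC hθ hcount hc ht) hs
  have hmain : HasSum (fun D : Ideal R ↦ (moebius D : ℝ) * (c ^ 2 * (y / absNorm D) ^ 2))
      (c ^ 2 * y ^ 2 / idealZeta R 2) := by
    have := (hasSum_moebius_mul_absNorm_rpow_neg two_ne_zero (hsummable one_lt_two)).mul_left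
      (c ^ 2 * y ^ 2)
    rw [← div_eq_mul_inv] at this
    refine this.congr_fun fun D ↦ ?_
    rw [rpow_neg (Nat.cast_nonneg _), rpow_two]
    ring
  have hbound (D : Ideal R) :
      ‖(moebius D : ℝ) * ((idealsOfNormLE R (y / absNorm D)).card : ℝ) ^ 2 -
        moebius D * (c ^ 2 * (y / absNorm D) ^ 2)‖ ≤
          C * (2 * c + C) * y ^ (1 + θ) * (absNorm D : ℝ) ^ (-(1 + θ)) := by
    rw [← mul_sub]
    refine (abs_moebius_mul_le D _).trans
      ((abs_card_idealsOfNormLE_sq_sub_le hC hθ₀ hθ hcount hc (by positivity)).trans_eq ?_)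
    rw [div_rpow hy (Nat.cast_nonneg _), rpow_neg (Nat.cast_nonneg _)]
    ring
  have hmajorant := (hsummable (by linarith : 1 < 1 + θ)).hasSum.mul_left
    (C * (2 * c + C) * y ^ (1 + θ))
  have herror := hmajorant.summable.of_norm_bounded hbound
  have hcard := (herror.hasSum.add hmain).tsum_eq
  simp only [sub_add_cancel] at hcard
  rw [card_pairsWithGcd_one_eq_tsum, hcard, add_sub_cancel_right, mul_right_comm]
  exact tsum_of_norm_bounded hmajorant hbound

lemma abs_div_sub_le {A B α r m E F : ℝ} (hm : 0 < m) (hA : m ≤ A) (hr : 0 ≤ r)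
    (hB : |B - r * α| ≤ F) (hAα : |A - α| ≤ E) : |B / A - r| ≤ (F + r * E) / m := by
  have hA₀ : 0 < A := hm.trans_le hA
  have hsplit : B / A - r = (B - r * α - r * (A - α)) / A := by field_simp; ring
  have hnum : |B - r * α - r * (A - α)| ≤ F + r * E := by
    refine (abs_sub _ _).trans (add_le_add hB ?_)
    rw [abs_mul, abs_of_nonneg hr]
    gcongr
  rw [hsplit, abs_div, abs_of_pos hA₀]
  exact div_le_div₀ ((abs_nonneg _).trans hnum) hnum hm hA

lemma one_div_mul_sq_le_one_div_rpow {z N : ℝ} (hz : 1 ≤ z) (hN : 1 ≤ N) (hθ : θ ≤ 1) :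
    1 / (z * N ^ 2) ≤ 1 / N ^ (1 + θ) := by
  refine one_div_le_one_div_of_le (by positivity) (le_trans ?_ (le_mul_of_one_le_left ?_ hz))
  · rw [← rpow_two]
    exact rpow_le_rpow_of_exponent_le hN (by linarith)
  · positivity

theorem exists_abs_card_pairsWithGcd_div_sub_le (hc : 0 < c) (hθ₀ : 0 < θ) (hθ : θ < 1)
    (hcount : ∀ t : ℝ, 0 ≤ t → |((idealsOfNormLE R t).card : ℝ) - c * t| ≤ C * t ^ θ) :
    ∃ C' : ℝ, 0 < C' ∧ ∀ x : ℝ, 1 ≤ x → ∀ K : Ideal R, K ≠ ⊥ →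
      |((pairsWithGcd R x K).card : ℝ) / ((idealsOfNormLE R x).card : ℝ) ^ 2 -
          1 / (idealZeta R 2 * (absNorm K : ℝ) ^ 2)| ≤
        C' / (x ^ (1 - θ) * (absNorm K : ℝ) ^ (1 + θ)) := by
  have hC : 0 < C := by
    have hhalf := (abs_le.1 (hcount (1 / 2) (by positivity))).1
    rw [idealsOfNormLE_eq_empty one_half_lt_one, Finset.card_empty, Nat.cast_zero] at hhalf
    exact pos_of_mul_pos_left (by linarith) (by positivity : 0 ≤ (1 / 2 : ℝ) ^ θ)
  obtain ⟨d, hd, hlower⟩ := exists_mul_le_card_idealsOfNormLE hc hθ hcount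
  have hζ : 1 ≤ idealZeta R 2 := one_le_idealZeta <| summable_absNorm_rpow_neg
    (fun t ht ↦ card_idealsOfNormLE_le hC.le hθ.le hcount hc.le ht) one_lt_two
  have hζ' : 0 ≤ idealZeta R (1 + θ) := tsum_nonneg fun I ↦ by positivity
  set E := C * (2 * c + C)
  refine ⟨(E * idealZeta R (1 + θ) + E) / d ^ 2, by positivity, fun x hx K hK ↦ ?_⟩
  have hx₀ : 0 < x := by linarith
  have hN₀ := absNorm_cast_pos hK
  have hB := abs_card_pairsWithGcd_one_sub_le hC.le hθ₀ hθ.le hcount hc.le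
    (by positivity : 0 ≤ x / absNorm K)
  have hA := abs_card_idealsOfNormLE_sq_sub_le hC.le hθ₀ hθ.le hcount hc.le hx₀.le
  have hmain : c ^ 2 * (x / absNorm K) ^ 2 / idealZeta R 2 =
      1 / (idealZeta R 2 * (absNorm K : ℝ) ^ 2) * (c ^ 2 * x ^ 2) := by ring
  have hd_sq : d ^ 2 * x ^ 2 ≤ ((idealsOfNormLE R x).card : ℝ) ^ 2 := by
    rw [← mul_pow]
    exact pow_le_pow_left₀ (by positivity) (hlower x hx) 2
  rw [hmain, ← card_pairsWithGcd hK] at hB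
  refine (abs_div_sub_le (by positivity) hd_sq (by positivity) hB hA).trans ?_
  have hx_sq : x ^ 2 = x ^ (1 - θ) * x ^ (1 + θ) := by
    rw [← rpow_add hx₀, ← rpow_two]
    ring_nf
  calc (E * idealZeta R (1 + θ) * (x / absNorm K) ^ (1 + θ) +
        1 / (idealZeta R 2 * (absNorm K : ℝ) ^ 2) * (E * x ^ (1 + θ))) / (d ^ 2 * x ^ 2)
      ≤ (E * idealZeta R (1 + θ) * (x / absNorm K) ^ (1 + θ) +
        1 / (absNorm K : ℝ) ^ (1 + θ) * (E * x ^ (1 + θ))) / (d ^ 2 * x ^ 2) := by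
        gcongr (_ + ?_ * _) / _
        exact one_div_mul_sq_le_one_div_rpow hζ (one_le_absNorm_cast hK) hθ.le
    _ = (E * idealZeta R (1 + θ) + E) / d ^ 2 /
        (x ^ (1 - θ) * (absNorm K : ℝ) ^ (1 + θ)) := by
        rw [div_rpow hx₀.le hN₀.le, hx_sq]
        field_simp

end GcdDensity

section GaussianIdeals

open Ideal

/-- The integral basis `1, √d` of `ℤ√d`. -/
noncomputable def zsqrtdBasis (d : ℤ) : Module.Basis (Fin 2) ℤ (ℤ√d) :=
  Module.Basis.ofEquivFun
    { toFun := fun z ↦ ![z.re, z.im]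
      invFun := fun v ↦ ⟨v 0, v 1⟩
      left_inv := fun z ↦ by simp
      right_inv := fun v ↦ by ext i; fin_cases i <;> simp
      map_add' := fun z w ↦ by ext i; fin_cases i <;> simp
      map_smul' := fun n z ↦ by ext i; fin_cases i <;> simp }

instance zsqrtd_module_free (d : ℤ) : Module.Free ℤ (ℤ√d) := .of_basis (zsqrtdBasis d)

instance zsqrtd_module_finite (d : ℤ) : Module.Finite ℤ (ℤ√d) := .of_basis (zsqrtdBasis d)

lemma algebraNorm_zsqrtd {d : ℤ} (z : ℤ√d) : Algebra.norm ℤ z = z.norm := by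
  rw [Algebra.norm_eq_matrix_det (zsqrtdBasis d), Matrix.det_fin_two]
  simp [Algebra.leftMulMatrix_eq_repr_mul, zsqrtdBasis, Zsqrtd.norm_def]

lemma gaussianInt_isUnit_iff {u : GaussianInt} :
    IsUnit u ↔ u = ⟨1, 0⟩ ∨ u = ⟨-1, 0⟩ ∨ u = ⟨0, 1⟩ ∨ u = ⟨0, -1⟩ := by
  rw [← Zsqrtd.norm_eq_one_iff' (by norm_num), Zsqrtd.norm_def]
  constructor
  · intro h
    have hre : |u.re| ≤ 1 := abs_le_one_iff_mul_self_le_one.2 (by nlinarith [mul_self_nonneg u.im])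
    have him : |u.im| ≤ 1 := abs_le_one_iff_mul_self_le_one.2 (by nlinarith [mul_self_nonneg u.re])
    obtain ⟨a, b⟩ := u
    obtain ⟨ha, ha'⟩ := abs_le.1 hre
    obtain ⟨hb, hb'⟩ := abs_le.1 him
    dsimp only at *
    interval_cases a <;> interval_cases b <;> simp at h ⊢
  · rintro (rfl | rfl | rfl | rfl) <;> rfl

lemma exists_isUnit_mul_mem_firstQuadrant {z : GaussianInt} (hz : z ≠ 0) :
    ∃ u, IsUnit u ∧ 1 ≤ (z * u).re ∧ 0 ≤ (z * u).im := by
  have hne : ¬(z.re = 0 ∧ z.im = 0) := fun h ↦ hz (Zsqrtd.ext h.1 h.2)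
  suffices ∃ u, (u = ⟨1, 0⟩ ∨ u = ⟨-1, 0⟩ ∨ u = ⟨0, 1⟩ ∨ u = ⟨0, -1⟩) ∧
      1 ≤ (z * u).re ∧ 0 ≤ (z * u).im by
    simpa only [gaussianInt_isUnit_iff]
  simp only [or_and_right, exists_or, exists_eq_left, Zsqrtd.re_mul, Zsqrtd.im_mul]
  omega

lemma eq_of_associated_of_mem_firstQuadrant {z w : GaussianInt} (h : Associated z w)
    (hz : 1 ≤ z.re ∧ 0 ≤ z.im) (hw : 1 ≤ w.re ∧ 0 ≤ w.im) : z = w := by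
  obtain ⟨u, rfl⟩ := h
  rcases gaussianInt_isUnit_iff.1 u.isUnit with hu | hu | hu | hu <;>
    simp only [hu, Zsqrtd.re_mul, Zsqrtd.im_mul, Zsqrtd.ext_iff] at hw ⊢ <;> omega

/-- The ideal of `ℤ[i]` generated by `a + bi`, indexed by the pair `(a, b)`. -/
noncomputable def gaussianIdeal (p : ℕ × ℕ) : Ideal GaussianInt := span {⟨p.1, p.2⟩}

lemma absNorm_gaussianIdeal (p : ℕ × ℕ) : absNorm (gaussianIdeal p) = p.1 ^ 2 + p.2 ^ 2 := by
  rw [gaussianIdeal, absNorm_span_singleton, algebraNorm_zsqrtd, ← Nat.cast_inj (R := ℤ),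
    GaussianInt.abs_natCast_norm, Zsqrtd.norm_def]
  push_cast
  ring

lemma exists_gaussianIdeal_eq {I : Ideal GaussianInt} (hI : I ≠ ⊥) :
    ∃ p : ℕ × ℕ, 1 ≤ p.1 ∧ gaussianIdeal p = I := by
  obtain ⟨z, rfl⟩ := (IsPrincipalIdealRing.principal I).principal
  obtain ⟨u, hu, hre, him⟩ := exists_isUnit_mul_mem_firstQuadrant
    (fun hz ↦ hI (span_singleton_eq_bot.2 hz))
  refine ⟨((z * u).re.toNat, (z * u).im.toNat), by dsimp only; omega, ?_⟩
  rw [gaussianIdeal, Int.toNat_of_nonneg (by omega), Int.toNat_of_nonneg him]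
  exact span_singleton_mul_right_unit hu z

lemma gaussianIdeal_injOn : Set.InjOn gaussianIdeal {p | 1 ≤ p.1} := by
  intro p hp q hq h
  have hpq := eq_of_associated_of_mem_firstQuadrant (span_singleton_eq_span_singleton.1 h)
    ⟨Nat.one_le_cast.2 hp, p.2.cast_nonneg⟩ ⟨Nat.one_le_cast.2 hq, q.2.cast_nonneg⟩
  rw [Zsqrtd.ext_iff] at hpq
  exact Prod.ext (Nat.cast_inj.1 hpq.1) (Nat.cast_inj.1 hpq.2)

lemma card_idealsOfNormLE_gaussianInt (x : ℝ) :
    (idealsOfNormLE GaussianInt x).card = (quarterDisc x).card := by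
  classical
  have himage : idealsOfNormLE GaussianInt x = (quarterDisc x).image gaussianIdeal := by
    ext I
    rw [Finset.mem_image, mem_idealsOfNormLE]
    constructor
    · rintro ⟨hI, hx⟩
      obtain ⟨p, hp, rfl⟩ := exists_gaussianIdeal_eq hI
      rw [absNorm_gaussianIdeal] at hx
      exact ⟨p, mem_quarterDisc.2 ⟨hp, mod_cast hx⟩, rfl⟩
    · rintro ⟨p, hp, rfl⟩
      obtain ⟨hp, hx⟩ := mem_quarterDisc.1 hp
      rw [Ne, ← absNorm_eq_zero_iff, absNorm_gaussianIdeal]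
      exact ⟨by positivity, mod_cast hx⟩
  rw [himage, Finset.card_image_of_injOn]
  exact gaussianIdeal_injOn.mono fun p hp ↦ (mem_quarterDisc.1 hp).1

end GaussianIdeals

lemma normI_eq_absNorm (I : Ideal GaussianInt) : normI I = Ideal.absNorm I := rfl

lemma mem_P {x : ℝ} {p : Ideal GaussianInt × Ideal GaussianInt} :
    p ∈ P x ↔ p.1 ∈ idealsOfNormLE GaussianInt x ∧ p.2 ∈ idealsOfNormLE GaussianInt x := by
  rw [mem_idealsOfNormLE, mem_idealsOfNormLE, and_and_and_comm, and_assoc]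
  rfl

lemma ncard_P (x : ℝ) : (P x).ncard = (idealsOfNormLE GaussianInt x).card ^ 2 := by
  have hP : P x = ↑(idealsOfNormLE GaussianInt x ×ˢ idealsOfNormLE GaussianInt x) := by
    ext p
    rw [mem_P, Finset.mem_coe, Finset.mem_product]
  rw [hP, Set.ncard_coe_finset, Finset.card_product, sq]

lemma ncard_P_sup_eq (x : ℝ) (K : Ideal GaussianInt) :
    {p ∈ P x | p.1 ⊔ p.2 = K}.ncard = (pairsWithGcd GaussianInt x K).card := by
  rw [← Set.ncard_coe_finset]
  congr 1
  ext p
  rw [Finset.mem_coe, mem_pairsWithGcd, ← mem_P, Set.mem_ofPred_eq]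

lemma zetaQi2_eq_idealZeta : zetaQi2 = idealZeta GaussianInt 2 := by
  have hterm (I : Ideal GaussianInt) :
      1 / (normI I : ℝ) ^ 2 = (Ideal.absNorm I : ℝ) ^ (-(2 : ℝ)) := by
    rw [rpow_neg (Nat.cast_nonneg _), rpow_two, one_div, normI_eq_absNorm]
  rw [zetaQi2, idealZeta, tsum_congr fun I : {I : Ideal GaussianInt // I ≠ ⊥} ↦ hterm I.1]
  refine tsum_subtype_eq_of_support_subset (s := {I : Ideal GaussianInt | I ≠ ⊥})
    (f := fun I ↦ (Ideal.absNorm I : ℝ) ^ (-(2 : ℝ))) fun I hI hbot ↦ hI ?_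
  dsimp only
  rw [hbot, Ideal.absNorm_bot, Nat.cast_zero, zero_rpow (neg_ne_zero.2 two_ne_zero)]

theorem gcdProbability_asymptotic_general :
    ∃ C : ℝ, 0 < C ∧ ∀ x : ℝ, 1 ≤ x → ∀ K : Ideal GaussianInt, K ≠ ⊥ →
      |({p ∈ P x | p.1 ⊔ p.2 = K}.ncard : ℝ) / ((P x).ncard : ℝ) -
          1 / (zetaQi2 * (normI K : ℝ) ^ 2)|
        ≤ C / (x ^ ((2 : ℝ) / 3) * (normI K : ℝ) ^ ((4 : ℝ) / 3)) := by
  have hcount (t : ℝ) (ht : 0 ≤ t) :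
      |((idealsOfNormLE GaussianInt t).card : ℝ) - π / 4 * t| ≤ 80 * t ^ (1 / 3 : ℝ) := by
    rw [card_idealsOfNormLE_gaussianInt]
    exact abs_card_quarterDisc_sub_le ht
  obtain ⟨C, hC, hbound⟩ := exists_abs_card_pairsWithGcd_div_sub_le (by positivity)
    (by norm_num) (by norm_num) hcount
  refine ⟨C, hC, fun x hx K hK ↦ ?_⟩
  rw [ncard_P, ncard_P_sup_eq, zetaQi2_eq_idealZeta, Nat.cast_pow, normI_eq_absNorm,
    show (2 : ℝ) / 3 = 1 - 1 / 3 by norm_num, show (4 : ℝ) / 3 = 1 + 1 / 3 by norm_num]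
  exact hbound x hx K hK

theorem gcdProbability_asymptotic :
    ∃ C : ℝ, 0 < C ∧ ∀ x : ℝ, 1 ≤ x → ∀ K : Ideal GaussianInt, K ≠ ⊥ → (normI K : ℝ) ≤ x →
      |({p ∈ P x | p.1 ⊔ p.2 = K}.ncard : ℝ) / ((P x).ncard : ℝ) -
          1 / (zetaQi2 * (normI K : ℝ) ^ 2)|
        ≤ C / (x ^ ((2 : ℝ) / 3) * (normI K : ℝ) ^ ((4 : ℝ) / 3)) := by
  obtain ⟨C, hC, h⟩ := gcdProbability_asymptotic_general
  exact ⟨C, hC, fun x hx K hK _ ↦ h x hx K hK⟩
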